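/- Let m ≥ 1, let K be an invertible m × m complex matrix, let λ₁, …, λ_m ∈ ℂ satisfy Re λ_l < 0 for every l, and let 0 < β₀ < 1. Then there exists T₀ > 1 such that for every t₀ ≥ T₀ the map sending a vector B = (β₁, …, β_m) ∈ [β₀, 1]^m to the vector in ℂ^m with j-th component ∑_{l=1}^m K_{j,l} · E_{β_l}(λ_l·t₀^{β_l}) is injective on [β₀, 1]^m; in particular, the vector-order is uniquely determined by the observed data. -/

import Mathlib

/-- The (one-parameter) Mittag-Leffler function `E_β(z) = ∑ₖ zᵏ / Γ(βk + 1)`. -/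
noncomputable def mittagLeffler (β : ℝ) (z : ℂ) : ℂ :=
  ∑' k : ℕ, z ^ k / Complex.Gamma (β * k + 1)

/-!
Since `K` is invertible, it is enough that each scalar map `β ↦ E_β (l * t ^ β)` is injective on
`[β₀, 1]` for large `t`. By Hankel's formula for `1 / Γ`, the sum
`l * E_β (l * t ^ β) + t ^ (-β) / Γ (1 - β)` equals `(2πi)⁻¹` times the integral of
`exp s * s⁻¹ * p ^ 2 / (p - l)`, where `p = (s / t) ^ β`, over a contour bounding a sector around
the positive axis that does not contain `l`. The integrand is `O(p ^ 2)` and differentiating it in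
`β` costs only a logarithm, so this integral is Lipschitz in `β` with constant
`O(t ^ (-β - β₀ / 2))`. The main term `t ^ (-β) / Γ (1 - β)`, in contrast, decreases in `β` at rate
at least `(1 - log 2) * t ^ (-β)`, because `1 / Γ` grows at rate at least `1 - log 2` on `[0, 1)`.
For large `t` the main term wins, and two different orders cannot give the same value.
-/

open MeasureTheory Set Filter Topology
open scoped ComplexConjugate

/-- The closed sector around the positive real axis whose boundary rays have directions of real
part `-η`, with its apex `0` removed. -/
def sector (η : ℝ) : Set ℂ := {s | s ≠ 0 ∧ -η * ‖s‖ ≤ s.re}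

lemma sector_subset_slitPlane {η : ℝ} (hη : η < 1) : sector η ⊆ Complex.slitPlane := by
  rintro s ⟨hs, hre⟩
  rw [Complex.mem_slitPlane_iff_not_le_zero]
  intro hle
  obtain ⟨hre_nonpos, him⟩ := Complex.le_def.1 hle
  have hnorm : ‖s‖ = -s.re := by
    rw [← Complex.abs_re_eq_norm.2 him, abs_of_nonpos hre_nonpos]
  nlinarith [norm_pos_iff.2 hs]

lemma ofReal_mul_mem_sector {η c : ℝ} (hc : 0 < c) {s : ℂ} (hs : s ∈ sector η) :
    (c : ℂ) * s ∈ sector η := by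
  refine ⟨mul_ne_zero (Complex.ofReal_ne_zero.2 hc.ne') hs.1, ?_⟩
  rw [norm_mul, Complex.norm_of_nonneg hc.le, Complex.re_ofReal_mul, mul_left_comm]
  exact mul_le_mul_of_nonneg_left hs.2 hc.le

/-- `v` is the direction of one of the two boundary rays of `sector η`. These rays are required to
point into the open left half-plane, where the exponential decays, without degenerating to the
negative real axis. -/
structure IsRayDirection (η : ℝ) (v : ℂ) : Prop where
  pos : 0 < η
  norm_eq_one : ‖v‖ = 1
  re_eq : v.re = -η
  im_ne_zero : v.im ≠ 0

lemma exists_isRayDirection_im_pos {η : ℝ} (hη₀ : 0 < η) (hη₁ : η < 1) :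
    ∃ v, IsRayDirection η v ∧ 0 < v.im := by
  have hpos : 0 < 1 - η ^ 2 := by nlinarith
  refine ⟨⟨-η, √(1 - η ^ 2)⟩, ⟨hη₀, ?_, rfl, (Real.sqrt_pos.2 hpos).ne'⟩, Real.sqrt_pos.2 hpos⟩
  rw [← sq_eq_sq₀ (norm_nonneg _) zero_le_one, Complex.sq_norm, Complex.normSq_mk,
    Real.mul_self_sqrt hpos.le]
  ring

namespace IsRayDirection

variable {η c r : ℝ} {v : ℂ}

lemma conjugate (hv : IsRayDirection η v) : IsRayDirection η (conj v) where
  pos := hv.pos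
  norm_eq_one := by rw [RCLike.norm_conj, hv.norm_eq_one]
  re_eq := by rw [Complex.conj_re, hv.re_eq]
  im_ne_zero := by rw [Complex.conj_im]; exact neg_ne_zero.2 hv.im_ne_zero

lemma lt_one (hv : IsRayDirection η v) : η < 1 := by
  have h := Complex.abs_re_lt_norm.2 hv.im_ne_zero
  rw [hv.norm_eq_one, hv.re_eq, abs_neg] at h
  exact (le_abs_self η).trans_lt h

lemma abs_im_pos (hv : IsRayDirection η v) : 0 < |v.im| := abs_pos.2 hv.im_ne_zero

lemma re_apex_add (hv : IsRayDirection η v) : (c + r * v : ℂ).re = c - η * r := by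
  rw [Complex.add_re, Complex.re_ofReal_mul, Complex.ofReal_re, hv.re_eq]
  ring

lemma abs_im_mul_radius_le_norm (hr : 0 ≤ r) : |v.im| * r ≤ ‖(c + r * v : ℂ)‖ := by
  have him : (c + r * v : ℂ).im = v.im * r := by simp [mul_comm]
  simpa only [him, abs_mul, abs_of_nonneg hr] using Complex.abs_im_le_norm (c + r * v : ℂ)

lemma abs_im_mul_apex_le_norm (hv : IsRayDirection η v) (hc : 0 ≤ c) :
    |v.im| * c ≤ ‖(c + r * v : ℂ)‖ := by
  -- rotating the ray onto the real axis sends the apex `c` to `c * conj v`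
  have him : ((c + r * v : ℂ) * conj v).im = -(v.im * c) := by
    rw [add_mul, mul_assoc, Complex.mul_conj]
    simp [mul_comm]
  simpa only [him, abs_neg, abs_mul, abs_of_nonneg hc, norm_mul, RCLike.norm_conj,
    hv.norm_eq_one, mul_one] using Complex.abs_im_le_norm ((c + r * v : ℂ) * conj v)

lemma mem_sector (hv : IsRayDirection η v) (hc : 0 ≤ c) (hr : 0 ≤ r)
    (hcr : 0 < c + r) : (c + r * v : ℂ) ∈ sector η := by
  constructor
  · rw [← norm_pos_iff]
    have hκ := hv.abs_im_pos
    nlinarith [abs_im_mul_radius_le_norm (c := c) (v := v) hr,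
      hv.abs_im_mul_apex_le_norm (r := r) hc]
  · have htri : r - c ≤ ‖(c + r * v : ℂ)‖ := by
      have h := norm_sub_norm_le (r * v : ℂ) (-(c : ℂ))
      rwa [norm_mul, norm_neg, Complex.norm_of_nonneg hr, Complex.norm_of_nonneg hc,
        hv.norm_eq_one, mul_one, sub_neg_eq_add, add_comm (r * v : ℂ)] at h
    rw [hv.re_apex_add]
    nlinarith [hv.lt_one, hv.pos]

lemma norm_exp_mul_mul_le (hv : IsRayDirection η v) {a C ρ : ℝ} (ha : 0 ≤ a) (hC : 0 ≤ C)
    (hρ : 0 < ρ) (hle : ρ ≤ ‖(c + r * v : ℂ)‖) {y : ℂ}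
    (hy : ‖y‖ ≤ C * ‖(c + r * v : ℂ)‖ ^ (-a)) :
    ‖Complex.exp (c + r * v) * y * v‖ ≤ C * ρ ^ (-a) * Real.exp c * Real.exp (-η * r) := by
  have hpow : ‖(c + r * v : ℂ)‖ ^ (-a) ≤ ρ ^ (-a) :=
    Real.rpow_le_rpow_of_nonpos hρ hle (neg_nonpos.2 ha)
  rw [norm_mul, norm_mul, hv.norm_eq_one, mul_one, Complex.norm_exp, hv.re_apex_add, mul_assoc,
    ← Real.exp_add, neg_mul, ← sub_eq_add_neg, mul_comm]
  gcongr
  exact hy.trans (by gcongr)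

end IsRayDirection

/-- The integral of `exp s * f s` along the ray from the real point `c` in direction `v`. -/
noncomputable def rayIntegral (f : ℂ → ℂ) (c : ℝ) (v : ℂ) : ℂ :=
  ∫ r in Ioi (0 : ℝ), Complex.exp (c + r * v) * f (c + r * v) * v

/-- The integral of `exp s * f s` along the Hankel contour that comes in from infinity against the
direction `conj v`, turns at the real point `c` and leaves in direction `v`. -/
noncomputable def hankelIntegral (f : ℂ → ℂ) (c : ℝ) (v : ℂ) : ℂ :=
  rayIntegral f c v - rayIntegral f c (conj v)

lemma hankelIntegral_const_mul (a : ℂ) (f : ℂ → ℂ) (c : ℝ) (v : ℂ) :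
    hankelIntegral (fun s ↦ a * f s) c v = a * hankelIntegral f c v := by
  simp only [hankelIntegral, rayIntegral, mul_sub, ← integral_const_mul]
  simp only [mul_assoc, mul_left_comm a]

lemma rayIntegral_congr {η c : ℝ} {v : ℂ} (hv : IsRayDirection η v) (hc : 0 ≤ c) {f g : ℂ → ℂ}
    (hfg : EqOn f g (sector η)) : rayIntegral f c v = rayIntegral g c v :=
  setIntegral_congr_fun measurableSet_Ioi fun r (hr : 0 < r) ↦ by
    simp only [hfg (hv.mem_sector hc hr.le (by positivity))]

lemma hankelIntegral_congr {η c : ℝ} {v : ℂ} (hv : IsRayDirection η v) (hc : 0 ≤ c) {f g : ℂ → ℂ}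
    (hfg : EqOn f g (sector η)) : hankelIntegral f c v = hankelIntegral g c v :=
  congrArg₂ (· - ·) (rayIntegral_congr hv hc hfg) (rayIntegral_congr hv.conjugate hc hfg)

lemma norm_rayIntegral_sub_le {η : ℝ} {v : ℂ} (hv : IsRayDirection η v) {f g : ℂ → ℂ} {w : ℝ → ℝ}
    (hf : IntegrableOn (fun r : ℝ ↦ Complex.exp ((0 : ℝ) + r * v) * f ((0 : ℝ) + r * v) * v)
      (Ioi 0))
    (hg : IntegrableOn (fun r : ℝ ↦ Complex.exp ((0 : ℝ) + r * v) * g ((0 : ℝ) + r * v) * v)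
      (Ioi 0))
    (hw : IntegrableOn (fun r ↦ w r * Real.exp (-η * r)) (Ioi 0))
    (hfg : ∀ s ∈ sector η, ‖f s - g s‖ ≤ w ‖s‖) :
    ‖rayIntegral f 0 v - rayIntegral g 0 v‖ ≤ ∫ r in Ioi 0, w r * Real.exp (-η * r) := by
  rw [rayIntegral, rayIntegral, ← integral_sub hf hg]
  refine norm_integral_le_of_norm_le hw ?_
  filter_upwards [ae_restrict_mem measurableSet_Ioi] with r (hr : 0 < r)
  have hs : ((0 : ℝ) + r * v : ℂ) ∈ sector η := hv.mem_sector le_rfl hr.le (by positivity)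
  have hnorm : ‖((0 : ℝ) + r * v : ℂ)‖ = r := by simp [hv.norm_eq_one, hr.le]
  rw [← sub_mul, ← mul_sub, norm_mul, norm_mul, hv.norm_eq_one, mul_one, Complex.norm_exp,
    hv.re_apex_add, zero_sub, neg_mul, mul_comm]
  gcongr
  simpa only [hnorm] using hfg _ hs

lemma norm_hankelIntegral_sub_le {η : ℝ} {v : ℂ} (hv : IsRayDirection η v) {f g : ℂ → ℂ}
    {w : ℝ → ℝ}
    (hf : ∀ u, IsRayDirection η u →
      IntegrableOn (fun r : ℝ ↦ Complex.exp ((0 : ℝ) + r * u) * f ((0 : ℝ) + r * u) * u) (Ioi 0))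
    (hg : ∀ u, IsRayDirection η u →
      IntegrableOn (fun r : ℝ ↦ Complex.exp ((0 : ℝ) + r * u) * g ((0 : ℝ) + r * u) * u) (Ioi 0))
    (hw : IntegrableOn (fun r ↦ w r * Real.exp (-η * r)) (Ioi 0))
    (hfg : ∀ s ∈ sector η, ‖f s - g s‖ ≤ w ‖s‖) :
    ‖hankelIntegral f 0 v - hankelIntegral g 0 v‖ ≤ 2 * ∫ r in Ioi 0, w r * Real.exp (-η * r) := by
  have hv' := hv.conjugate
  rw [hankelIntegral, hankelIntegral, sub_sub_sub_comm, two_mul]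
  exact (norm_sub_le _ _).trans (add_le_add
    (norm_rayIntegral_sub_le hv (hf v hv) (hg v hv) hw hfg)
    (norm_rayIntegral_sub_le hv' (hf _ hv') (hg _ hv') hw hfg))

/-- `f` is a holomorphic symbol of order `-a` on `sector η`, with constant `C`: it is bounded by
`C * ‖s‖ ^ (-a)`, and its derivative by `C * ‖s‖ ^ (-a - 1)`. -/
structure IsSymbol (η a C : ℝ) (f : ℂ → ℂ) : Prop where
  differentiableAt : ∀ s ∈ sector η, DifferentiableAt ℂ f s
  norm_le : ∀ s ∈ sector η, ‖f s‖ ≤ C * ‖s‖ ^ (-a)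
  norm_deriv_le : ∀ s ∈ sector η, ‖deriv f s‖ ≤ C * ‖s‖ ^ (-(a + 1))

lemma integrableOn_exp_neg_mul {η : ℝ} (hη : 0 < η) :
    IntegrableOn (fun r : ℝ ↦ Real.exp (-η * r)) (Ioi 0) :=
  integrableOn_exp_mul_Ioi (neg_lt_zero.2 hη) 0

lemma integrableOn_rpow_mul_exp_neg_mul {η a : ℝ} (hη : 0 < η) (ha : -1 < a) :
    IntegrableOn (fun r : ℝ ↦ r ^ a * Real.exp (-η * r)) (Ioi 0) := by
  simpa only [Real.rpow_one] using integrableOn_rpow_mul_exp_neg_mul_rpow ha one_pos hη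

namespace IsSymbol

variable {η a C c r : ℝ} {f : ℂ → ℂ} {v : ℂ}

lemma nonneg_const (hf : IsSymbol η a C f) (hη : 0 ≤ η) : 0 ≤ C := by
  have h := hf.norm_le 1 ⟨one_ne_zero, by simp; linarith⟩
  rw [norm_one, Real.one_rpow, mul_one] at h
  exact (norm_nonneg _).trans h

lemma const_mul (hf : IsSymbol η a C f) (k : ℂ) : IsSymbol η a (‖k‖ * C) fun s ↦ k * f s where
  differentiableAt s hs := (hf.differentiableAt s hs).const_mul k
  norm_le s hs := by
    rw [norm_mul, mul_assoc]
    gcongr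
    exact hf.norm_le s hs
  norm_deriv_le s hs := by
    rw [deriv_const_mul_field, norm_mul, mul_assoc]
    gcongr
    exact hf.norm_deriv_le s hs

lemma continuousAt_ray (hf : IsSymbol η a C f) (hv : IsRayDirection η v) (hc : 0 ≤ c)
    (hr : 0 < r) :
    ContinuousAt (fun p : ℝ × ℝ ↦ Complex.exp (p.1 + p.2 * v) * f (p.1 + p.2 * v) * v) (c, r) := by
  have hfs : ContinuousAt f ((c, r).1 + (c, r).2 * v) :=
    (hf.differentiableAt _ (hv.mem_sector hc hr.le (by positivity))).continuousAt
  have hray : ContinuousAt (fun p : ℝ × ℝ ↦ (p.1 + p.2 * v : ℂ)) (c, r) := by fun_prop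
  exact (hray.cexp.mul (ContinuousAt.comp hfs hray)).mul_const v

lemma aestronglyMeasurable_ray (hf : IsSymbol η a C f) (hv : IsRayDirection η v) (hc : 0 ≤ c) :
    AEStronglyMeasurable (fun r : ℝ ↦ Complex.exp (c + r * v) * f (c + r * v) * v)
      (volume.restrict (Ioi 0)) := by
  refine ContinuousOn.aestronglyMeasurable (fun r hr ↦ ?_) measurableSet_Ioi
  exact ((hf.continuousAt_ray hv hc hr).comp (f := fun r : ℝ ↦ (c, r))
    (by fun_prop)).continuousWithinAt

lemma aestronglyMeasurable_deriv_ray (f : ℂ → ℂ) (c : ℝ) (v : ℂ) :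
    AEStronglyMeasurable (fun r : ℝ ↦ Complex.exp (c + r * v) * deriv f (c + r * v) * v)
      (volume.restrict (Ioi 0)) := by
  have hray : Measurable fun r : ℝ ↦ (c + r * v : ℂ) := by fun_prop
  exact ((hray.cexp.mul ((measurable_deriv f).comp hray)).mul_const v).aestronglyMeasurable

lemma norm_ray_le_of_le_apex (hf : IsSymbol η a C f) (ha : 0 ≤ a) (hv : IsRayDirection η v)
    {c₀ : ℝ} (hc₀ : 0 < c₀) (hc : c₀ ≤ c) (hr : 0 ≤ r) :
    ‖Complex.exp (c + r * v) * f (c + r * v) * v‖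
      ≤ C * (|v.im| * c₀) ^ (-a) * Real.exp c * Real.exp (-η * r) :=
  have hκ := hv.abs_im_pos
  hv.norm_exp_mul_mul_le ha (hf.nonneg_const hv.pos.le) (by positivity)
    ((by gcongr : |v.im| * c₀ ≤ |v.im| * c).trans (hv.abs_im_mul_apex_le_norm (hc₀.le.trans hc)))
    (hf.norm_le _ (hv.mem_sector (hc₀.le.trans hc) hr (by linarith)))

lemma norm_deriv_ray_le_of_le_apex (hf : IsSymbol η a C f) (ha : 0 ≤ a) (hv : IsRayDirection η v)
    {c₀ : ℝ} (hc₀ : 0 < c₀) (hc : c₀ ≤ c) (hr : 0 ≤ r) :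
    ‖Complex.exp (c + r * v) * deriv f (c + r * v) * v‖
      ≤ C * (|v.im| * c₀) ^ (-(a + 1)) * Real.exp c * Real.exp (-η * r) :=
  have hκ := hv.abs_im_pos
  hv.norm_exp_mul_mul_le (by positivity) (hf.nonneg_const hv.pos.le) (by positivity)
    ((by gcongr : |v.im| * c₀ ≤ |v.im| * c).trans (hv.abs_im_mul_apex_le_norm (hc₀.le.trans hc)))
    (hf.norm_deriv_le _ (hv.mem_sector (hc₀.le.trans hc) hr (by linarith)))

lemma norm_ray_le_of_radius (hf : IsSymbol η a C f) (ha : 0 ≤ a) (hv : IsRayDirection η v)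
    (hc : 0 ≤ c) (hr : 0 < r) :
    ‖Complex.exp (c + r * v) * f (c + r * v) * v‖
      ≤ C * (|v.im| * r) ^ (-a) * Real.exp c * Real.exp (-η * r) :=
  have hκ := hv.abs_im_pos
  hv.norm_exp_mul_mul_le ha (hf.nonneg_const hv.pos.le) (by positivity)
    (IsRayDirection.abs_im_mul_radius_le_norm hr.le)
    (hf.norm_le _ (hv.mem_sector hc hr.le (by positivity)))

lemma integrableOn_ray (hf : IsSymbol η a C f) (ha : 0 ≤ a) (hv : IsRayDirection η v)
    (hc : 0 < c) :
    IntegrableOn (fun r : ℝ ↦ Complex.exp (c + r * v) * f (c + r * v) * v) (Ioi 0) :=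
  ((integrableOn_exp_neg_mul hv.pos).const_mul _).mono' (hf.aestronglyMeasurable_ray hv hc.le)
    ((ae_restrict_iff' measurableSet_Ioi).2 <| .of_forall fun _ hr ↦
      hf.norm_ray_le_of_le_apex ha hv hc le_rfl hr.le)

lemma integrableOn_deriv_ray (hf : IsSymbol η a C f) (ha : 0 ≤ a) (hv : IsRayDirection η v)
    (hc : 0 < c) :
    IntegrableOn (fun r : ℝ ↦ Complex.exp (c + r * v) * deriv f (c + r * v) * v) (Ioi 0) :=
  ((integrableOn_exp_neg_mul hv.pos).const_mul _).mono' (aestronglyMeasurable_deriv_ray f c v)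
    ((ae_restrict_iff' measurableSet_Ioi).2 <| .of_forall fun _ hr ↦
      hf.norm_deriv_ray_le_of_le_apex ha hv hc le_rfl hr.le)

lemma integrableOn_ray_zero (hf : IsSymbol η a C f) (ha₀ : 0 ≤ a) (ha₁ : a < 1)
    (hv : IsRayDirection η v) :
    IntegrableOn (fun r : ℝ ↦ Complex.exp ((0 : ℝ) + r * v) * f ((0 : ℝ) + r * v) * v)
      (Ioi 0) := by
  refine ((integrableOn_rpow_mul_exp_neg_mul hv.pos (neg_lt_neg ha₁)).const_mul
    (C * |v.im| ^ (-a))).mono' (hf.aestronglyMeasurable_ray hv le_rfl) ?_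
  refine (ae_restrict_iff' measurableSet_Ioi).2 <| .of_forall fun r hr ↦ ?_
  refine (hf.norm_ray_le_of_radius ha₀ hv le_rfl hr).trans_eq ?_
  rw [Real.mul_rpow (abs_nonneg _) (mem_Ioi.1 hr).le, Real.exp_zero]
  ring

lemma hasDerivAt_exp_mul (hf : IsSymbol η a C f) {s : ℂ} (hs : s ∈ sector η) :
    HasDerivAt (fun s ↦ Complex.exp s * f s) (Complex.exp s * f s + Complex.exp s * deriv f s) s :=
  (Complex.hasDerivAt_exp s).mul (hf.differentiableAt s hs).hasDerivAt

lemma rayIntegral_add_rayIntegral_deriv (hf : IsSymbol η a C f) (ha : 0 ≤ a)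
    (hv : IsRayDirection η v) (hc : 0 < c) :
    rayIntegral f c v + rayIntegral (deriv f) c v = -(Complex.exp c * f c) := by
  have hderiv : ∀ r ∈ Ici (0 : ℝ),
      HasDerivAt (fun r : ℝ ↦ Complex.exp (c + r * v) * f (c + r * v))
        (Complex.exp (c + r * v) * f (c + r * v) * v
          + Complex.exp (c + r * v) * deriv f (c + r * v) * v) r := fun r hr ↦ by
    have hray : HasDerivAt (fun r : ℝ ↦ (c + r * v : ℂ)) v r := by
      simpa using ((hasDerivAt_id r).ofReal_comp.mul_const v).const_add (c : ℂ)
    have hs := hv.mem_sector hc.le (mem_Ici.1 hr) (by linarith [mem_Ici.1 hr])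
    rw [← add_mul]
    exact (hf.hasDerivAt_exp_mul hs).comp r hray
  have hlim : Tendsto (fun r : ℝ ↦ Complex.exp (c + r * v) * f (c + r * v)) atTop (𝓝 0) := by
    have hdecay : Tendsto (fun r : ℝ ↦ Real.exp (-η * r)) atTop (𝓝 0) :=
      Real.tendsto_exp_atBot.comp (tendsto_id.const_mul_atTop_of_neg (neg_lt_zero.2 hv.pos))
    have hbound := hdecay.const_mul (C * (|v.im| * c) ^ (-a) * Real.exp c)
    rw [mul_zero] at hbound
    refine squeeze_zero_norm' ?_ hbound
    filter_upwards [eventually_ge_atTop 0] with r hr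
    simpa only [norm_mul _ v, hv.norm_eq_one, mul_one] using
      hf.norm_ray_le_of_le_apex ha hv hc le_rfl hr
  have hint := hf.integrableOn_ray ha hv hc
  have hint' := hf.integrableOn_deriv_ray ha hv hc
  rw [rayIntegral, rayIntegral, ← integral_add hint hint',
    integral_Ioi_of_hasDerivAt_of_tendsto' hderiv (hint.add hint') hlim]
  simp

lemma hasDerivAt_rayIntegral (hf : IsSymbol η a C f) (ha : 0 ≤ a) (hv : IsRayDirection η v)
    (hc : 0 < c) : HasDerivAt (fun x ↦ rayIntegral f x v) (-(Complex.exp c * f c)) c := by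
  have hint := hf.integrableOn_ray ha hv hc
  have hint' := hf.integrableOn_deriv_ray ha hv hc
  have hnhds : Ioo (c / 2) (2 * c) ∈ 𝓝 c := Ioo_mem_nhds (by linarith) (by linarith)
  rw [← hf.rayIntegral_add_rayIntegral_deriv ha hv hc, rayIntegral, rayIntegral,
    ← integral_add hint hint']
  refine (hasDerivAt_integral_of_dominated_loc_of_deriv_le
    (F := fun (x r : ℝ) ↦ Complex.exp (x + r * v) * f (x + r * v) * v)
    (F' := fun (x r : ℝ) ↦ Complex.exp (x + r * v) * f (x + r * v) * v
      + Complex.exp (x + r * v) * deriv f (x + r * v) * v)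
    (bound := fun r ↦ C * (|v.im| * (c / 2)) ^ (-a) * Real.exp (2 * c) * Real.exp (-η * r)
      + C * (|v.im| * (c / 2)) ^ (-(a + 1)) * Real.exp (2 * c) * Real.exp (-η * r))
    hnhds ?_ hint (hint.add hint').aestronglyMeasurable ?_
    (((integrableOn_exp_neg_mul hv.pos).const_mul _).add
      ((integrableOn_exp_neg_mul hv.pos).const_mul _)) ?_).2
  · filter_upwards [hnhds] with x hx
    exact hf.aestronglyMeasurable_ray hv (by linarith [hx.1])
  · filter_upwards [ae_restrict_mem measurableSet_Ioi] with r (hr : 0 < r) x hx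
    have hC := hf.nonneg_const hv.pos.le
    refine norm_add_le_of_le
      ((hf.norm_ray_le_of_le_apex ha hv (half_pos hc) hx.1.le hr.le).trans ?_)
      ((hf.norm_deriv_ray_le_of_le_apex ha hv (half_pos hc) hx.1.le hr.le).trans ?_) <;>
    · gcongr
      exact hx.2.le
  · filter_upwards [ae_restrict_mem measurableSet_Ioi] with r (hr : 0 < r) x hx
    have hs := hv.mem_sector (c := x) (by linarith [hx.1]) hr.le (by linarith [hx.1])
    have hshift : HasDerivAt (fun x : ℝ ↦ (x + r * v : ℂ)) 1 x := by
      simpa using (hasDerivAt_id x).ofReal_comp.add_const (r * v : ℂ)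
    rw [← add_mul]
    exact (((hf.hasDerivAt_exp_mul hs).comp x hshift).congr_deriv (mul_one _)).mul_const v

lemma tendsto_rayIntegral_zero (hf : IsSymbol η a C f) (ha₀ : 0 ≤ a) (ha₁ : a < 1)
    (hv : IsRayDirection η v) :
    Tendsto (fun c ↦ rayIntegral f c v) (𝓝[>] 0) (𝓝 (rayIntegral f 0 v)) := by
  have hC := hf.nonneg_const hv.pos.le
  refine tendsto_integral_filter_of_dominated_convergence
    (fun r ↦ C * |v.im| ^ (-a) * Real.exp 1 * (r ^ (-a) * Real.exp (-η * r))) ?_ ?_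
    ((integrableOn_rpow_mul_exp_neg_mul hv.pos (neg_lt_neg ha₁)).const_mul _) ?_
  · filter_upwards [self_mem_nhdsWithin] with c hc
    exact hf.aestronglyMeasurable_ray hv (mem_Ioi.1 hc).le
  · filter_upwards [Ioo_mem_nhdsGT one_pos] with c hc
    filter_upwards [ae_restrict_mem measurableSet_Ioi] with r (hr : 0 < r)
    calc ‖Complex.exp (c + r * v) * f (c + r * v) * v‖
        ≤ C * (|v.im| * r) ^ (-a) * Real.exp c * Real.exp (-η * r) :=
          hf.norm_ray_le_of_radius ha₀ hv hc.1.le hr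
      _ ≤ C * (|v.im| * r) ^ (-a) * Real.exp 1 * Real.exp (-η * r) := by
          gcongr
          exact hc.2.le
      _ = _ := by
          rw [Real.mul_rpow (abs_nonneg _) hr.le]
          ring
  · filter_upwards [ae_restrict_mem measurableSet_Ioi] with r (hr : 0 < r)
    exact ((hf.continuousAt_ray hv le_rfl hr).comp (f := fun c : ℝ ↦ (c, r))
      (by fun_prop)).tendsto.mono_left nhdsWithin_le_nhds

lemma hankelIntegral_eq_of_pos (hf : IsSymbol η a C f) (ha : 0 ≤ a) (hv : IsRayDirection η v)
    {c c' : ℝ} (hc : 0 < c) (hc' : 0 < c') : hankelIntegral f c v = hankelIntegral f c' v := by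
  have hderiv : ∀ x ∈ Ioi (0 : ℝ), HasDerivAt (fun x ↦ hankelIntegral f x v) 0 x := fun x hx ↦ by
    exact ((hf.hasDerivAt_rayIntegral ha hv hx).sub
      (hf.hasDerivAt_rayIntegral ha hv.conjugate hx)).congr_deriv (sub_self _)
  exact isOpen_Ioi.is_const_of_deriv_eq_zero isPreconnected_Ioi
    (fun x hx ↦ (hderiv x hx).differentiableAt.differentiableWithinAt)
    (fun x hx ↦ (hderiv x hx).deriv) hc hc'

lemma hankelIntegral_eq_zero_apex (hf : IsSymbol η a C f) (ha₀ : 0 ≤ a) (ha₁ : a < 1)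
    (hv : IsRayDirection η v) (hc : 0 < c) : hankelIntegral f c v = hankelIntegral f 0 v := by
  have hlim : Tendsto (fun x ↦ hankelIntegral f x v) (𝓝[>] 0) (𝓝 (hankelIntegral f 0 v)) :=
    (hf.tendsto_rayIntegral_zero ha₀ ha₁ hv).sub (hf.tendsto_rayIntegral_zero ha₀ ha₁ hv.conjugate)
  refine tendsto_nhds_unique (tendsto_const_nhds.congr' ?_) hlim
  filter_upwards [self_mem_nhdsWithin] with x hx
  exact hf.hankelIntegral_eq_of_pos ha₀ hv hc hx

lemma hankelIntegral_add_hankelIntegral_deriv (hf : IsSymbol η a C f) (ha : 0 ≤ a)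
    (hv : IsRayDirection η v) (hc : 0 < c) :
    hankelIntegral f c v + hankelIntegral (deriv f) c v = 0 := by
  rw [hankelIntegral, hankelIntegral, sub_add_sub_comm,
    hf.rayIntegral_add_rayIntegral_deriv ha hv hc,
    hf.rayIntegral_add_rayIntegral_deriv ha hv.conjugate hc, sub_self]

end IsSymbol

lemma norm_cpow_mul_exp_neg_mul {a z : ℂ} {t : ℝ} (ht : 0 < t) :
    ‖(t : ℂ) ^ a * Complex.exp (-(z * t))‖ = t ^ a.re * Real.exp (-z.re * t) := by
  rw [norm_mul, Complex.norm_cpow_eq_rpow_re_of_pos ht, Complex.norm_exp, Complex.neg_re,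
    Complex.re_mul_ofReal, neg_mul]

lemma aestronglyMeasurable_cpow_mul_exp_neg_mul (a z : ℂ) :
    AEStronglyMeasurable (fun t : ℝ ↦ (t : ℂ) ^ a * Complex.exp (-(z * t)))
      (volume.restrict (Ioi 0)) := by
  refine ContinuousOn.aestronglyMeasurable (fun t (ht : 0 < t) ↦ ?_) measurableSet_Ioi
  have hpow : ContinuousAt (fun t : ℝ ↦ (t : ℂ) ^ a) t :=
    Complex.continuous_ofReal.continuousAt.cpow continuousAt_const (.inl ht)
  exact (hpow.mul (by fun_prop)).continuousWithinAt

lemma integrableOn_cpow_mul_exp_neg_mul {a z : ℂ} (ha : -1 < a.re) (hz : 0 < z.re) :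
    IntegrableOn (fun t : ℝ ↦ (t : ℂ) ^ a * Complex.exp (-(z * t))) (Ioi 0) :=
  (integrableOn_rpow_mul_exp_neg_mul hz ha).mono'
    (aestronglyMeasurable_cpow_mul_exp_neg_mul a z)
    ((ae_restrict_iff' measurableSet_Ioi).2 <| .of_forall fun _ ht ↦
      (norm_cpow_mul_exp_neg_mul ht).le)

lemma differentiableAt_integral_cpow_mul_exp_neg_mul {a z : ℂ} (ha : -1 < a.re) (hz : 0 < z.re) :
    DifferentiableAt ℂ
      (fun z : ℂ ↦ ∫ t in Ioi (0 : ℝ), (t : ℂ) ^ a * Complex.exp (-(z * t))) z := by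
  have hnhds : {x : ℂ | z.re / 2 < x.re} ∈ 𝓝 z :=
    (isOpen_lt continuous_const Complex.continuous_re).mem_nhds (half_lt_self hz)
  refine (hasDerivAt_integral_of_dominated_loc_of_deriv_le
    (F := fun (z : ℂ) (t : ℝ) ↦ (t : ℂ) ^ a * Complex.exp (-(z * t)))
    (F' := fun (z : ℂ) (t : ℝ) ↦ -((t : ℂ) ^ (a + 1) * Complex.exp (-(z * t))))
    (bound := fun t ↦ t ^ (a + 1).re * Real.exp (-(z.re / 2) * t)) hnhds
    (.of_forall fun x ↦ aestronglyMeasurable_cpow_mul_exp_neg_mul a x)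
    (integrableOn_cpow_mul_exp_neg_mul ha hz)
    (aestronglyMeasurable_cpow_mul_exp_neg_mul (a + 1) z).neg ?_
    (integrableOn_rpow_mul_exp_neg_mul (half_pos hz) (by simp; linarith)) ?_).2.differentiableAt
  · filter_upwards [ae_restrict_mem measurableSet_Ioi] with t (ht : 0 < t) x (hx : _ < x.re)
    rw [norm_neg, norm_cpow_mul_exp_neg_mul ht]
    gcongr
  · filter_upwards [ae_restrict_mem measurableSet_Ioi] with t (ht : 0 < t) x _
    refine (((hasDerivAt_id x).mul_const (t : ℂ)).neg.cexp.const_mul ((t : ℂ) ^ a)).congr_deriv ?_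
    rw [Complex.cpow_add _ _ (Complex.ofReal_ne_zero.2 ht.ne'), Complex.cpow_one]
    simp only [Pi.neg_apply, id_eq]
    ring

lemma tendsto_ofReal_nhdsNE_one : Tendsto ((↑) : ℝ → ℂ) (𝓝[≠] 1) (𝓝[≠] 1) :=
  tendsto_nhdsWithin_of_tendsto_nhds_of_eventually_within _
    (Complex.continuous_ofReal.tendsto' 1 1 Complex.ofReal_one |>.mono_left nhdsWithin_le_nhds)
    (by filter_upwards [self_mem_nhdsWithin] with r hr using Complex.ofReal_ne_one.2 hr)

lemma integral_cpow_mul_exp_neg_mul_Ioi_of_re_pos {a z : ℂ} (ha : 0 < a.re) (hz : 0 < z.re) :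
    ∫ t in Ioi (0 : ℝ), (t : ℂ) ^ (a - 1) * Complex.exp (-(z * t))
      = z ^ (-a) * Complex.Gamma a := by
  -- both sides are holomorphic in `z`, and Mathlib has the formula for real `z`
  have hopen : IsOpen {x : ℂ | 0 < x.re} := isOpen_lt continuous_const Complex.continuous_re
  have hlhs : AnalyticOnNhd ℂ (fun z : ℂ ↦
      ∫ t in Ioi (0 : ℝ), (t : ℂ) ^ (a - 1) * Complex.exp (-(z * t))) {x : ℂ | 0 < x.re} :=
    DifferentiableOn.analyticOnNhd (fun x hx ↦ (differentiableAt_integral_cpow_mul_exp_neg_mul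
      (by simpa using ha) hx).differentiableWithinAt) hopen
  have hrhs : AnalyticOnNhd ℂ (fun z : ℂ ↦ z ^ (-a) * Complex.Gamma a) {x : ℂ | 0 < x.re} :=
    DifferentiableOn.analyticOnNhd (fun x hx ↦
      ((differentiableAt_id.cpow_const (.inl hx)).mul_const _).differentiableWithinAt) hopen
  refine hlhs.eqOn_of_preconnected_of_frequently_eq hrhs
    (convex_halfSpace_re_gt 0).isPreconnected (z₀ := 1) (by simp)
    (tendsto_ofReal_nhdsNE_one.frequently (Eventually.frequently ?_)) hz
  filter_upwards [nhdsWithin_le_nhds (lt_mem_nhds one_pos)] with r hr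
  rw [Complex.integral_cpow_mul_exp_neg_mul_Ioi ha hr, one_div,
    Complex.inv_cpow_ofReal_nonneg hr.le, Complex.cpow_neg]

lemma ofReal_mul_cpow {r : ℝ} (hr : 0 < r) {x : ℂ} (hx : x ≠ 0) (a : ℂ) :
    ((r : ℂ) * x) ^ a = (r : ℂ) ^ a * x ^ a := by
  have hr' : (r : ℂ) ≠ 0 := Complex.ofReal_ne_zero.2 hr.ne'
  rw [Complex.cpow_def_of_ne_zero (mul_ne_zero hr' hx), Complex.cpow_def_of_ne_zero hr',
    Complex.cpow_def_of_ne_zero hx, Complex.log_ofReal_mul hr hx, Complex.ofReal_log hr.le,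
    ← Complex.exp_add, add_mul]

lemma rayIntegral_cpow_zero {w v : ℂ} (hw : w.re < 1) (hv : v.re < 0) :
    rayIntegral (fun s ↦ s ^ (-w)) 0 v
      = Complex.exp ((Complex.log v - Complex.log (-v)) * (1 - w)) * Complex.Gamma (1 - w) := by
  have hv₀ : v ≠ 0 := by rintro rfl; exact lt_irrefl _ hv
  have hintegrand : ∀ r ∈ Ioi (0 : ℝ),
      Complex.exp ((0 : ℝ) + r * v) * ((0 : ℝ) + r * v) ^ (-w) * v
        = (r : ℂ) ^ (1 - w - 1) * Complex.exp (-(-v * r)) * v ^ (1 - w) := fun r hr ↦ by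
    rw [Complex.ofReal_zero, zero_add, ofReal_mul_cpow hr hv₀, sub_eq_neg_add (1 : ℂ) w,
      Complex.cpow_add _ _ hv₀, Complex.cpow_one, add_sub_cancel_right, neg_mul, neg_neg,
      mul_comm v]
    ring
  rw [rayIntegral, setIntegral_congr_fun measurableSet_Ioi hintegrand, integral_mul_const,
    integral_cpow_mul_exp_neg_mul_Ioi_of_re_pos (by simpa using hw) (by simpa using hv),
    Complex.cpow_def_of_ne_zero hv₀, Complex.cpow_def_of_ne_zero (neg_ne_zero.2 hv₀),
    mul_right_comm, ← Complex.exp_add]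
  ring_nf

lemma log_sub_log_neg_of_im_pos {v : ℂ} (hv : 0 < v.im) :
    Complex.log v - Complex.log (-v) = Real.pi * Complex.I := by
  rw [Complex.log, Complex.log, norm_neg, Complex.arg_neg_eq_arg_sub_pi_of_im_pos hv]
  push_cast
  ring

lemma log_sub_log_neg_of_im_neg {v : ℂ} (hv : v.im < 0) :
    Complex.log v - Complex.log (-v) = -(Real.pi * Complex.I) := by
  rw [Complex.log, Complex.log, norm_neg, Complex.arg_neg_eq_arg_add_pi_of_im_neg hv]
  push_cast
  ring

lemma sin_pi_mul_mul_Gamma_one_sub {w : ℂ} (hw : w.re < 1) :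
    Complex.sin (Real.pi * w) * Complex.Gamma (1 - w) = Real.pi * (Complex.Gamma w)⁻¹ := by
  have hreflect := Complex.Gamma_mul_Gamma_one_sub w
  have hΓ : Complex.Gamma (1 - w) ≠ 0 := Complex.Gamma_ne_zero_of_re_pos (by simpa using hw)
  by_cases hpole : Complex.Gamma w = 0
  · have hsin : Complex.sin (Real.pi * w) = 0 := by
      simpa [hpole, Real.pi_ne_zero] using hreflect.symm
    rw [hsin, hpole, zero_mul, inv_zero, mul_zero]
  · have hsin : Complex.sin (Real.pi * w) ≠ 0 := fun h ↦ by
      rw [h, div_zero] at hreflect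
      exact mul_ne_zero hpole hΓ hreflect
    rw [eq_div_iff hsin] at hreflect
    rw [eq_mul_inv_iff_mul_eq₀ hpole]
    linear_combination hreflect

lemma hankelIntegral_cpow_zero {w v : ℂ} (hw : w.re < 1) (hre : v.re < 0) (him : 0 < v.im) :
    hankelIntegral (fun s ↦ s ^ (-w)) 0 v = 2 * Real.pi * Complex.I * (Complex.Gamma w)⁻¹ := by
  have hsin : Complex.sin (Real.pi * w) = Complex.sin (Real.pi * (1 - w)) := by
    rw [mul_sub, mul_one, Complex.sin_pi_sub]
  rw [mul_right_comm, mul_assoc (2 : ℂ), ← sin_pi_mul_mul_Gamma_one_sub hw, hsin, Complex.sin,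
    hankelIntegral, rayIntegral_cpow_zero hw hre, rayIntegral_cpow_zero hw (by simpa using hre),
    log_sub_log_neg_of_im_pos him, log_sub_log_neg_of_im_neg (by simpa using him)]
  ring_nf
  rw [Complex.I_sq]
  ring

lemma norm_cpow_neg_ofReal (s : ℂ) (w : ℝ) : ‖s ^ (-w : ℂ)‖ = ‖s‖ ^ (-w) := by
  rw [← Complex.ofReal_neg, Complex.norm_cpow_real]

lemma deriv_cpow_neg {η w : ℝ} (hη : η < 1) {s : ℂ} (hs : s ∈ sector η) :
    deriv (fun s : ℂ ↦ s ^ (-w : ℂ)) s = -w * s ^ (-(w + 1 : ℝ) : ℂ) := by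
  rw [Complex.deriv_cpow_const (sector_subset_slitPlane hη hs), Complex.ofReal_add,
    Complex.ofReal_one, neg_add, sub_eq_add_neg]

lemma isSymbol_cpow_neg {η w : ℝ} (hη : η < 1) (hw : 0 ≤ w) :
    IsSymbol η w (1 + w) fun s ↦ s ^ (-w : ℂ) where
  differentiableAt s hs := differentiableAt_id.cpow_const (sector_subset_slitPlane hη hs)
  norm_le s _ := by
    rw [norm_cpow_neg_ofReal]
    exact le_mul_of_one_le_left (by positivity) (by linarith)
  norm_deriv_le s hs := by
    rw [deriv_cpow_neg hη hs, norm_mul, norm_neg, Complex.norm_of_nonneg hw,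
      norm_cpow_neg_ofReal]
    gcongr
    linarith

lemma hankelIntegral_cpow_neg_of_lt_one {η w c : ℝ} {v : ℂ} (hv : IsRayDirection η v)
    (him : 0 < v.im) (hw₀ : 0 ≤ w) (hw₁ : w < 1) (hc : 0 < c) :
    hankelIntegral (fun s ↦ s ^ (-w : ℂ)) c v
      = 2 * Real.pi * Complex.I * (Complex.Gamma w)⁻¹ := by
  rw [(isSymbol_cpow_neg hv.lt_one hw₀).hankelIntegral_eq_zero_apex hw₀ hw₁ hv hc]
  exact hankelIntegral_cpow_zero hw₁ (by linarith [hv.re_eq, hv.pos]) him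

lemma hankelIntegral_cpow_neg_eq_mul {η w c : ℝ} {v : ℂ} (hv : IsRayDirection η v) (hw : 0 ≤ w)
    (hc : 0 < c) :
    hankelIntegral (fun s ↦ s ^ (-w : ℂ)) c v
      = w * hankelIntegral (fun s ↦ s ^ (-(w + 1 : ℝ) : ℂ)) c v := by
  have hparts := (isSymbol_cpow_neg hv.lt_one hw).hankelIntegral_add_hankelIntegral_deriv hw hv hc
  rw [hankelIntegral_congr hv hc.le (fun s hs ↦ deriv_cpow_neg hv.lt_one hs),
    hankelIntegral_const_mul] at hparts
  linear_combination hparts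

lemma continuousAt_rayIntegral_cpow_neg {η w c : ℝ} {v : ℂ} (hv : IsRayDirection η v) (hw : 0 < w)
    (hc : 0 < c) : ContinuousAt (fun w : ℝ ↦ rayIntegral (fun s ↦ s ^ (-w : ℂ)) c v) w := by
  have hκ := hv.abs_im_pos
  set ρ := min 1 (|v.im| * c)
  have hρ : 0 < ρ := lt_min one_pos (by positivity)
  have hnhds : Ioo 0 (w + 1) ∈ 𝓝 w := Ioo_mem_nhds hw (lt_add_one w)
  refine tendsto_integral_filter_of_dominated_convergence
    (fun r ↦ 1 * ρ ^ (-(w + 1)) * Real.exp c * Real.exp (-η * r)) ?_ ?_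
    ((integrableOn_exp_neg_mul hv.pos).const_mul _) ?_
  · filter_upwards [hnhds] with x hx
    exact (isSymbol_cpow_neg hv.lt_one hx.1.le).aestronglyMeasurable_ray hv hc.le
  · filter_upwards [hnhds] with x hx
    filter_upwards [ae_restrict_mem measurableSet_Ioi] with r _
    refine (hv.norm_exp_mul_mul_le hx.1.le zero_le_one hρ
      ((min_le_right _ _).trans (hv.abs_im_mul_apex_le_norm hc.le)) (y := (c + r * v) ^ (-x : ℂ))
      (by rw [norm_cpow_neg_ofReal, one_mul])).trans ?_
    gcongr 1 * ?_ * _ * _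
    exact Real.rpow_le_rpow_of_exponent_ge hρ (min_le_left _ _) (by linarith [hx.2])
  · filter_upwards [ae_restrict_mem measurableSet_Ioi] with r (hr : 0 < r)
    have hs := hv.mem_sector hc.le hr.le (by positivity)
    have hpow : ContinuousAt (fun x : ℝ ↦ (c + r * v : ℂ) ^ (-x : ℂ)) w :=
      ContinuousAt.const_cpow (by fun_prop) (.inl hs.1)
    exact (hpow.const_mul _).mul_const _

lemma hankelIntegral_cpow_neg_one {η c : ℝ} {v : ℂ} (hv : IsRayDirection η v) (him : 0 < v.im)
    (hc : 0 < c) :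
    hankelIntegral (fun s ↦ s ^ (-(1 : ℝ) : ℂ)) c v
      = 2 * Real.pi * Complex.I * (Complex.Gamma (1 : ℝ))⁻¹ := by
  have hlhs := ((continuousAt_rayIntegral_cpow_neg hv one_pos hc).sub
    (continuousAt_rayIntegral_cpow_neg hv.conjugate one_pos hc)).tendsto
  have hrhs : Continuous fun w : ℝ ↦ 2 * Real.pi * Complex.I * (Complex.Gamma w)⁻¹ :=
    continuous_const.mul
      (Complex.differentiable_one_div_Gamma.continuous.comp Complex.continuous_ofReal)
  have hrhs_lim := (hrhs.tendsto 1).mono_left (nhdsWithin_le_nhds (s := Iio 1))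
  refine tendsto_nhds_unique (hlhs.mono_left nhdsWithin_le_nhds) (hrhs_lim.congr' ?_)
  filter_upwards [Ioo_mem_nhdsLT one_pos] with w hw
  exact (hankelIntegral_cpow_neg_of_lt_one hv him hw.1.le hw.2 hc).symm

lemma hankelIntegral_cpow_neg {η w c : ℝ} {v : ℂ} (hv : IsRayDirection η v) (him : 0 < v.im)
    (hw : 0 ≤ w) (hc : 0 < c) :
    hankelIntegral (fun s ↦ s ^ (-w : ℂ)) c v
      = 2 * Real.pi * Complex.I * (Complex.Gamma w)⁻¹ := by
  obtain ⟨n, hn⟩ := exists_nat_gt w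
  induction n generalizing w with
  | zero => exact absurd hn (by simpa using hw)
  | succ n ih =>
    rcases lt_trichotomy w 1 with hlt | rfl | hgt
    · exact hankelIntegral_cpow_neg_of_lt_one hv him hw hlt hc
    · exact hankelIntegral_cpow_neg_one hv him hc
    · have hpos : 0 < w - 1 := sub_pos.2 hgt
      have hne : ((w - 1 : ℝ) : ℂ) ≠ 0 := Complex.ofReal_ne_zero.2 hpos.ne'
      have hrec := hankelIntegral_cpow_neg_eq_mul hv hpos.le hc
      have hΓ := Complex.one_div_Gamma_eq_self_mul_one_div_Gamma_add_one ((w - 1 : ℝ) : ℂ)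
      rw [ih hpos.le (by push_cast at hn; linarith), sub_add_cancel, hΓ] at hrec
      rw [Complex.ofReal_sub, Complex.ofReal_one] at hrec hne
      rw [sub_add_cancel] at hrec
      refine mul_left_cancel₀ hne ?_
      rw [← hrec]
      ring

lemma cpow_mem_sector {η β : ℝ} (hβ₀ : 0 ≤ β) (hβ₁ : β ≤ 1) {s : ℂ} (hs : s ∈ sector η) :
    s ^ (β : ℂ) ∈ sector η := by
  refine ⟨fun h ↦ hs.1 (Complex.cpow_eq_zero_iff _ _ |>.1 h).1, ?_⟩
  have hcos_sector : -η ≤ Real.cos s.arg := by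
    rw [Complex.cos_arg hs.1, le_div_iff₀ (norm_pos_iff.2 hs.1)]
    exact hs.2
  have hcos_mono : Real.cos s.arg ≤ Real.cos (s.arg * β) := by
    rw [← Real.cos_abs s.arg, ← Real.cos_abs (s.arg * β), abs_mul, abs_of_nonneg hβ₀]
    exact Real.cos_le_cos_of_nonneg_of_le_pi (by positivity) (Complex.abs_arg_le_pi s)
      (mul_le_of_le_one_right (abs_nonneg _) hβ₁)
  rw [Complex.norm_cpow_real, Complex.cpow_ofReal_re, mul_comm]
  gcongr
  exact hcos_sector.trans hcos_mono

/-- Seen from every point of `sector η`, the point `z` is at least as far away, up to the factor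
`δ`, as the sum of the two moduli. This is a scale-invariant form of `z` lying outside the
sector. -/
def IsSeparatedFromSector (η δ : ℝ) (z : ℂ) : Prop :=
  ∀ u ∈ sector η, δ * (‖u‖ + ‖z‖) ≤ ‖u - z‖

lemma isSeparatedFromSector_of_re_le {η : ℝ} (hη₀ : 0 ≤ η) (hη₁ : η ≤ 1) {z : ℂ}
    (hz : z.re ≤ -(2 * η) * ‖z‖) : IsSeparatedFromSector η (η / 5) z := by
  intro u hu
  have hre : u.re - z.re ≤ ‖u - z‖ := Complex.re_le_norm (u - z)
  have htri : ‖u‖ - ‖z‖ ≤ ‖u - z‖ := norm_sub_norm_le u z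
  rcases le_total ‖u‖ (3 / 2 * ‖z‖) with hsmall | hlarge
  · nlinarith [hu.2, norm_nonneg z]
  · nlinarith [norm_nonneg z, norm_nonneg u]

lemma IsSeparatedFromSector.mul_ofReal {η δ c : ℝ} (hc : 0 < c) {z : ℂ}
    (hz : IsSeparatedFromSector η δ z) : IsSeparatedFromSector η δ (z * c) := by
  intro u hu
  have hc' : (c : ℂ) ≠ 0 := Complex.ofReal_ne_zero.2 hc.ne'
  have hscaled := hz _ (ofReal_mul_mem_sector (inv_pos.2 hc) hu)
  have hfactor : u - z * c = c * ((c⁻¹ : ℝ) * u - z) := by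
    push_cast
    field_simp
  rw [hfactor, norm_mul, norm_mul, Complex.norm_of_nonneg hc.le]
  rw [norm_mul, Complex.norm_of_nonneg (inv_pos.2 hc).le] at hscaled
  calc δ * (‖u‖ + ‖z‖ * c) = c * (δ * (c⁻¹ * ‖u‖ + ‖z‖)) := by field_simp
    _ ≤ _ := by gcongr

/-- With `p = s ^ β`, the Laplace transform of `t ↦ E_β (z * t ^ β)` is `s⁻¹ * p / (p - z)`.
Multiplying by `z` and removing the leading singularity at `s = 0`, which is `-(s⁻¹ * p)`, leaves
`s⁻¹ * resolventRemainder z p`. -/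
noncomputable def resolventRemainder (z p : ℂ) : ℂ := p ^ 2 / (p - z)

section resolventRemainder

variable {η δ : ℝ} {z p : ℂ}

lemma IsSeparatedFromSector.norm_sub_pos (hδ : 0 < δ) (hz : IsSeparatedFromSector η δ z)
    (hp : p ∈ sector η) : 0 < ‖p - z‖ :=
  have := norm_pos_iff.2 hp.1
  (by positivity : 0 < δ * (‖p‖ + ‖z‖)).trans_le (hz p hp)

lemma norm_resolventRemainder_le (hδ : 0 < δ) (hz : IsSeparatedFromSector η δ z)
    (hp : p ∈ sector η) : ‖resolventRemainder z p‖ ≤ δ⁻¹ * (‖p‖ ^ 2 / (‖p‖ + ‖z‖)) := by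
  have hpos := norm_pos_iff.2 hp.1
  rw [resolventRemainder, norm_div, norm_pow, inv_mul_eq_div, div_div, mul_comm]
  gcongr
  exact hz p hp

lemma hasDerivAt_resolventRemainder (hδ : 0 < δ) (hz : IsSeparatedFromSector η δ z)
    (hp : p ∈ sector η) :
    HasDerivAt (resolventRemainder z) (p * (p - 2 * z) / (p - z) ^ 2) p := by
  refine (((hasDerivAt_id p).pow 2).div ((hasDerivAt_id p).sub_const z)
    (norm_pos_iff.1 (hz.norm_sub_pos hδ hp))).congr_deriv ?_
  simp only [Pi.pow_apply, id_eq]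
  ring

lemma norm_deriv_resolventRemainder_le (hδ : 0 < δ) (hz : IsSeparatedFromSector η δ z)
    (hp : p ∈ sector η) :
    ‖p * (p - 2 * z) / (p - z) ^ 2‖ ≤ 2 * δ⁻¹ ^ 2 * (‖p‖ / (‖p‖ + ‖z‖)) := by
  have hpos := norm_pos_iff.2 hp.1
  have hnum : ‖p - 2 * z‖ ≤ 2 * (‖p‖ + ‖z‖) := by
    refine (norm_sub_le _ _).trans ?_
    rw [norm_mul, Complex.norm_two]
    linarith
  calc ‖p * (p - 2 * z) / (p - z) ^ 2‖
      ≤ ‖p‖ * (2 * (‖p‖ + ‖z‖)) / (δ * (‖p‖ + ‖z‖)) ^ 2 := by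
        rw [norm_div, norm_mul, norm_pow]
        gcongr
        exact hz p hp
    _ = _ := by field_simp

end resolventRemainder

section symbol

variable {η δ β : ℝ} {z s : ℂ}

lemma norm_inv_mul_cpow_ofReal (hs : s ≠ 0) :
    ‖s‖⁻¹ * ‖s ^ (β : ℂ)‖ = ‖s‖ ^ (-(1 - β)) := by
  rw [Complex.norm_cpow_real, neg_sub, Real.rpow_sub_one (norm_ne_zero_iff.2 hs), inv_mul_eq_div]

lemma norm_resolventRemainder_cpow_le (hδ : 0 < δ) (hβ₀ : 0 ≤ β) (hβ₁ : β ≤ 1)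
    (hz : IsSeparatedFromSector η δ z) (hs : s ∈ sector η) :
    ‖resolventRemainder z (s ^ (β : ℂ))‖ ≤ δ⁻¹ * ‖s ^ (β : ℂ)‖ := by
  have hp := cpow_mem_sector hβ₀ hβ₁ hs
  have hpos := norm_pos_iff.2 hp.1
  refine (norm_resolventRemainder_le hδ hz hp).trans ?_
  gcongr
  rw [div_le_iff₀ (by positivity), sq]
  gcongr
  exact le_add_of_nonneg_right (norm_nonneg z)

lemma hasDerivAt_inv_mul_resolventRemainder (hη : η < 1) (hδ : 0 < δ) (hβ₀ : 0 ≤ β) (hβ₁ : β ≤ 1)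
    (hz : IsSeparatedFromSector η δ z) (hs : s ∈ sector η) :
    HasDerivAt (fun s ↦ s⁻¹ * resolventRemainder z (s ^ (β : ℂ)))
      (s⁻¹ ^ 2 * (β * s ^ (β : ℂ) *
        (s ^ (β : ℂ) * (s ^ (β : ℂ) - 2 * z) / (s ^ (β : ℂ) - z) ^ 2) -
          resolventRemainder z (s ^ (β : ℂ)))) s := by
  have hpow : HasDerivAt (fun s : ℂ ↦ s ^ (β : ℂ)) (β * (s ^ (β : ℂ) / s)) s := by
    refine ((hasDerivAt_id s).cpow_const (sector_subset_slitPlane hη hs)).congr_deriv ?_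
    rw [id, mul_one, Complex.cpow_sub _ _ hs.1, Complex.cpow_one]
  have hcomp := (hasDerivAt_resolventRemainder hδ hz (cpow_mem_sector hβ₀ hβ₁ hs)).comp s hpow
  exact ((hasDerivAt_inv hs.1).mul hcomp).congr_deriv (by simp only [Function.comp_apply]; ring)

lemma isSymbol_inv_mul_resolventRemainder (hη : η < 1) (hδ : 0 < δ) (hβ₀ : 0 ≤ β) (hβ₁ : β ≤ 1)
    (hz : IsSeparatedFromSector η δ z) :
    IsSymbol η (1 - β) (δ⁻¹ + 2 * δ⁻¹ ^ 2)
      fun s ↦ s⁻¹ * resolventRemainder z (s ^ (β : ℂ)) where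
  differentiableAt s hs :=
    (hasDerivAt_inv_mul_resolventRemainder hη hδ hβ₀ hβ₁ hz hs).differentiableAt
  norm_le s hs := by
    rw [← norm_inv_mul_cpow_ofReal hs.1, norm_mul, norm_inv, mul_left_comm]
    gcongr
    refine (norm_resolventRemainder_cpow_le hδ hβ₀ hβ₁ hz hs).trans ?_
    gcongr
    exact le_add_of_nonneg_right (by positivity)
  norm_deriv_le s hs := by
    have hp := cpow_mem_sector hβ₀ hβ₁ hs
    have hpos := norm_pos_iff.2 hp.1
    have hexp : ‖s‖ ^ (-(1 - β + 1)) = ‖s‖⁻¹ ^ 2 * ‖s ^ (β : ℂ)‖ := by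
      rw [neg_add, ← sub_eq_add_neg, Real.rpow_sub_one (norm_ne_zero_iff.2 hs.1),
        ← norm_inv_mul_cpow_ofReal hs.1]
      ring
    have hderiv : ‖s ^ (β : ℂ) * (s ^ (β : ℂ) - 2 * z) / (s ^ (β : ℂ) - z) ^ 2‖ ≤ 2 * δ⁻¹ ^ 2 := by
      refine (norm_deriv_resolventRemainder_le hδ hz hp).trans (mul_le_of_le_one_right ?_ ?_)
      · positivity
      · exact div_le_one_of_le₀ (le_add_of_nonneg_right (norm_nonneg z)) (by positivity)
    rw [(hasDerivAt_inv_mul_resolventRemainder hη hδ hβ₀ hβ₁ hz hs).deriv, hexp, norm_mul, norm_pow,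
      norm_inv, mul_left_comm]
    gcongr
    refine (norm_sub_le _ _).trans ?_
    rw [norm_mul, norm_mul, Complex.norm_of_nonneg hβ₀]
    calc _ ≤ 1 * ‖s ^ (β : ℂ)‖ * (2 * δ⁻¹ ^ 2) + δ⁻¹ * ‖s ^ (β : ℂ)‖ := by
          gcongr
          exact norm_resolventRemainder_cpow_le hδ hβ₀ hβ₁ hz hs
      _ = _ := by ring

end symbol

lemma hasSum_rayIntegral {η c : ℝ} {v : ℂ} (hv : IsRayDirection η v) {F : ℕ → ℂ → ℂ}
    {f : ℂ → ℂ} {b : ℕ → ℝ} (hb : Summable b)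
    (hmeas : ∀ k, Measurable (F k))
    (hbound : ∀ k, ∀ r > (0 : ℝ), ‖F k (c + r * v)‖ ≤ b k)
    (hsum : ∀ r > (0 : ℝ), HasSum (fun k ↦ F k (c + r * v)) (f (c + r * v))) :
    HasSum (fun k ↦ rayIntegral (F k) c v) (rayIntegral f c v) := by
  refine hasSum_integral_of_dominated_convergence
    (fun k r ↦ b k * (Real.exp c * Real.exp (-η * r))) (fun k ↦ ?_) (fun k ↦ ?_)
    (.of_forall fun r ↦ hb.mul_right _) ?_ ?_
  · have hray : Measurable fun r : ℝ ↦ (c + r * v : ℂ) := by fun_prop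
    exact ((hray.cexp.mul ((hmeas k).comp hray)).mul_const v).aestronglyMeasurable
  · filter_upwards [ae_restrict_mem measurableSet_Ioi] with r hr
    rw [norm_mul, norm_mul, hv.norm_eq_one, mul_one, Complex.norm_exp, hv.re_apex_add,
      ← Real.exp_add, neg_mul, ← sub_eq_add_neg, mul_comm]
    gcongr
    exact hbound k r hr
  · simp only [tsum_mul_right]
    exact ((integrableOn_exp_neg_mul hv.pos).const_mul _).const_mul _
  · filter_upwards [ae_restrict_mem measurableSet_Ioi] with r hr
    exact ((hsum r hr).mul_left _).mul_right _

section representation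

variable {η δ β c : ℝ} {v z s : ℂ}

lemma pow_mul_cpow_neg_eq (hs : s ≠ 0) (k : ℕ) :
    z ^ k * s ^ (-(1 - β + β * k : ℝ) : ℂ) =
      s⁻¹ * s ^ (β : ℂ) * (z / s ^ (β : ℂ)) ^ k := by
  have hexp : (-(1 - β + β * k : ℝ) : ℂ) = β - 1 - β * k := by push_cast; ring
  rw [hexp, Complex.cpow_sub _ _ hs, Complex.cpow_sub _ _ hs, Complex.cpow_one,
    Complex.cpow_mul_nat, div_pow]
  ring

lemma hasSum_inv_mul_resolventRemainder (hs : s ≠ 0) (hz : ‖z‖ < ‖s‖ ^ β) :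
    HasSum (fun k : ℕ ↦ z ^ k * s ^ (-(1 - β + β * k : ℝ) : ℂ))
      (s⁻¹ * resolventRemainder z (s ^ (β : ℂ))) := by
  have hp : s ^ (β : ℂ) ≠ 0 := fun h ↦ hs (Complex.cpow_eq_zero_iff _ _ |>.1 h).1
  have hratio : ‖z / s ^ (β : ℂ)‖ < 1 := by
    rw [norm_div, div_lt_one (norm_pos_iff.2 hp), Complex.norm_cpow_real]
    exact hz
  have hgeom := (hasSum_geometric_of_norm_lt_one hratio).mul_left (s⁻¹ * s ^ (β : ℂ))
  have hlimit : s⁻¹ * resolventRemainder z (s ^ (β : ℂ)) =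
      s⁻¹ * s ^ (β : ℂ) * (1 - z / s ^ (β : ℂ))⁻¹ := by
    rw [resolventRemainder, one_sub_div hp, inv_div]
    ring
  rw [hlimit]
  exact hgeom.congr_fun (pow_mul_cpow_neg_eq hs)

lemma norm_pow_mul_cpow_neg_le {ρ : ℝ} (hβ₀ : 0 < β) (hβ₁ : β ≤ 1) (hρ : 0 < ρ) (hρs : ρ ≤ ‖s‖)
    (hz : 2 * ‖z‖ ≤ ρ ^ β) (k : ℕ) :
    ‖z ^ k * s ^ (-(1 - β + β * k : ℝ) : ℂ)‖ ≤ ρ ^ (-(1 - β)) * (1 / 2) ^ k := by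
  have hs : 0 < ‖s‖ := hρ.trans_le hρs
  have hρβ : ρ ^ β ≤ ‖s‖ ^ β := by gcongr
  rw [pow_mul_cpow_neg_eq (norm_pos_iff.1 hs), norm_mul, norm_mul, norm_inv,
    norm_inv_mul_cpow_ofReal (norm_pos_iff.1 hs), norm_pow, norm_div, Complex.norm_cpow_real]
  have hratio : ‖z‖ / ‖s‖ ^ β ≤ 1 / 2 := by
    rw [div_le_iff₀ (by positivity)]
    linarith
  gcongr ?_ * ?_ ^ k
  exact Real.rpow_le_rpow_of_nonpos hρ hρs (by linarith)

lemma exists_apex_rpow_gt (hv : IsRayDirection η v) (hβ : 0 < β) (x : ℝ) :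
    ∃ c > 0, x < (|v.im| * c) ^ β := by
  have htend : Tendsto (fun c : ℝ ↦ (|v.im| * c) ^ β) atTop atTop :=
    (tendsto_rpow_atTop hβ).comp (tendsto_id.const_mul_atTop hv.abs_im_pos)
  exact ((eventually_gt_atTop 0).and (htend.eventually_gt_atTop x)).exists

lemma hasSum_rayIntegral_resolventRemainder (hv : IsRayDirection η v) (hβ₀ : 0 < β) (hβ₁ : β ≤ 1)
    (hc : 0 < c) (hz : 2 * ‖z‖ < (|v.im| * c) ^ β) :
    HasSum (fun k : ℕ ↦ rayIntegral (fun s ↦ z ^ k * s ^ (-(1 - β + β * k : ℝ) : ℂ)) c v)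
      (rayIntegral (fun s ↦ s⁻¹ * resolventRemainder z (s ^ (β : ℂ))) c v) := by
  have hρ : 0 < |v.im| * c := mul_pos hv.abs_im_pos hc
  have hle (r : ℝ) : |v.im| * c ≤ ‖(c + r * v : ℂ)‖ := hv.abs_im_mul_apex_le_norm hc.le
  refine hasSum_rayIntegral hv
    (summable_geometric_two.mul_left _) (fun k ↦ by fun_prop)
    (fun k r _ ↦ norm_pow_mul_cpow_neg_le hβ₀ hβ₁ hρ (hle r) hz.le k) (fun r _ ↦ ?_)
  refine hasSum_inv_mul_resolventRemainder (norm_pos_iff.1 (hρ.trans_le (hle r))) ?_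
  have hmono : (|v.im| * c) ^ β ≤ ‖(c + r * v : ℂ)‖ ^ β := by gcongr; exact hle r
  linarith [norm_nonneg z]

lemma hasSum_hankelIntegral_resolventRemainder (hv : IsRayDirection η v) (him : 0 < v.im)
    (hβ₀ : 0 < β) (hβ₁ : β ≤ 1) (hc : 0 < c) (hz : 2 * ‖z‖ < (|v.im| * c) ^ β) :
    HasSum (fun k : ℕ ↦ 2 * Real.pi * Complex.I * (z ^ k / Complex.Gamma (1 - β + β * k : ℝ)))
      (hankelIntegral (fun s ↦ s⁻¹ * resolventRemainder z (s ^ (β : ℂ))) c v) := by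
  have hray := (hasSum_rayIntegral_resolventRemainder hv hβ₀ hβ₁ hc hz).sub
    (hasSum_rayIntegral_resolventRemainder hv.conjugate hβ₀ hβ₁ hc (by simpa using hz))
  have hterm (k : ℕ) : 2 * Real.pi * Complex.I * (z ^ k / Complex.Gamma (1 - β + β * k : ℝ)) =
      hankelIntegral (fun s ↦ z ^ k * s ^ (-(1 - β + β * k : ℝ) : ℂ)) c v := by
    have hw : 0 ≤ 1 - β + β * k := add_nonneg (sub_nonneg.2 hβ₁) (by positivity)
    rw [hankelIntegral_const_mul, hankelIntegral_cpow_neg hv him hw hc]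
    ring
  exact hray.congr_fun hterm

theorem hankelIntegral_resolventRemainder (hv : IsRayDirection η v) (him : 0 < v.im) (hδ : 0 < δ)
    (hβ₀ : 0 < β) (hβ₁ : β ≤ 1) (hz : IsSeparatedFromSector η δ z) :
    hankelIntegral (fun s ↦ s⁻¹ * resolventRemainder z (s ^ (β : ℂ))) 0 v =
      2 * Real.pi * Complex.I * ((Complex.Gamma (1 - β))⁻¹ + z * mittagLeffler β z) := by
  obtain ⟨c, hc, hcz⟩ := exists_apex_rpow_gt hv hβ₀ (2 * ‖z‖)
  have hsymbol := isSymbol_inv_mul_resolventRemainder hv.lt_one hδ hβ₀.le hβ₁ hz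
  have hsum := hasSum_hankelIntegral_resolventRemainder hv him hβ₀ hβ₁ hc hcz
  have hshift (k : ℕ) : z ^ (k + 1) / Complex.Gamma (1 - β + β * (k + 1 : ℕ) : ℝ) =
      z * (z ^ k / Complex.Gamma (β * k + 1)) := by
    have harg : ((1 - β + β * (k + 1 : ℕ) : ℝ) : ℂ) = β * k + 1 := by push_cast; ring
    rw [harg, pow_succ']
    ring
  rw [← hsymbol.hankelIntegral_eq_zero_apex (sub_nonneg.2 hβ₁) (sub_lt_self 1 hβ₀) hv hc,
    ← hsum.tsum_eq, hsum.summable.tsum_eq_zero_add, tsum_mul_left]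
  simp only [hshift, tsum_mul_left, mittagLeffler]
  simp [mul_add]

end representation

lemma resolventRemainder_mul (z p : ℂ) {c : ℂ} (hc : c ≠ 0) :
    resolventRemainder (z * c) (p * c) = c * resolventRemainder z p := by
  rw [resolventRemainder, resolventRemainder, ← sub_mul]
  field_simp

/-- The symbol whose Hankel integral is `2πi` times the remainder
`l * E_β (l * t ^ β) + t ^ (-β) / Γ (1 - β)` of the large-time expansion. -/
noncomputable def remainderSymbol (l : ℂ) (t β : ℝ) (s : ℂ) : ℂ :=
  (t ^ (-β) : ℝ) * (s⁻¹ * resolventRemainder (l * (t ^ β : ℝ)) (s ^ (β : ℂ)))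

section remainderSymbol

variable {η δ β t : ℝ} {v l s : ℂ}

lemma remainderSymbol_eq (ht : 0 < t) (hs : s ≠ 0) :
    remainderSymbol l t β s = s⁻¹ * resolventRemainder l (((t⁻¹ : ℝ) * s) ^ (β : ℂ)) := by
  have htβ : ((t ^ β : ℝ) : ℂ) ≠ 0 := Complex.ofReal_ne_zero.2 (Real.rpow_pos_of_pos ht β).ne'
  have hpow : s ^ (β : ℂ) = ((t⁻¹ : ℝ) * s) ^ (β : ℂ) * (t ^ β : ℝ) := by
    rw [ofReal_mul_cpow (inv_pos.2 ht) hs, ← Complex.ofReal_cpow (inv_pos.2 ht).le,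
      Real.inv_rpow ht.le, Complex.ofReal_inv]
    field_simp
  rw [remainderSymbol, hpow, resolventRemainder_mul _ _ htβ, Real.rpow_neg ht.le,
    Complex.ofReal_inv (t ^ β), mul_left_comm s⁻¹, inv_mul_cancel_left₀ htβ]

lemma isSymbol_remainderSymbol (hη : η < 1) (hδ : 0 < δ) (hβ₀ : 0 ≤ β) (hβ₁ : β ≤ 1)
    (ht : 0 < t) (hl : IsSeparatedFromSector η δ l) :
    IsSymbol η (1 - β) (‖((t ^ (-β) : ℝ) : ℂ)‖ * (δ⁻¹ + 2 * δ⁻¹ ^ 2)) (remainderSymbol l t β) :=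
  (isSymbol_inv_mul_resolventRemainder hη hδ hβ₀ hβ₁
    (hl.mul_ofReal (Real.rpow_pos_of_pos ht β))).const_mul _

theorem hankelIntegral_remainderSymbol (hv : IsRayDirection η v) (him : 0 < v.im) (hδ : 0 < δ)
    (hβ₀ : 0 < β) (hβ₁ : β ≤ 1) (ht : 0 < t) (hl : IsSeparatedFromSector η δ l) :
    hankelIntegral (remainderSymbol l t β) 0 v =
      2 * Real.pi * Complex.I * ((t ^ (-β) * (Real.Gamma (1 - β))⁻¹ : ℝ) +
        l * mittagLeffler β (l * (t ^ β : ℝ))) := by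
  have htβ : 0 < t ^ β := Real.rpow_pos_of_pos ht β
  have htβ' : ((t ^ β : ℝ) : ℂ) ≠ 0 := Complex.ofReal_ne_zero.2 htβ.ne'
  have hconst := hankelIntegral_const_mul (t ^ (-β) : ℝ)
    (fun s ↦ s⁻¹ * resolventRemainder (l * (t ^ β : ℝ)) (s ^ (β : ℂ))) 0 v
  refine hconst.trans ?_
  rw [hankelIntegral_resolventRemainder hv him hδ hβ₀ hβ₁ (hl.mul_ofReal htβ), Real.rpow_neg ht.le]
  push_cast [← Complex.Gamma_ofReal]
  field_simp

end remainderSymbol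

lemma rpow_le_rpow_add_rpow {r a b c : ℝ} (hr : 0 < r) (hab : a ≤ b) (hbc : b ≤ c) :
    r ^ b ≤ r ^ a + r ^ c := by
  have ha : 0 < r ^ a := Real.rpow_pos_of_pos hr a
  have hc : 0 < r ^ c := Real.rpow_pos_of_pos hr c
  rcases le_total r 1 with hr₁ | hr₁
  · linarith [Real.rpow_le_rpow_of_exponent_ge hr hr₁ hab]
  · linarith [Real.rpow_le_rpow_of_exponent_le hr₁ hbc]

lemma inv_mul_rpow_le {r t a c e γ : ℝ} (hr : 0 < r) (ht : 1 ≤ t) (hγ : γ ≤ e) (ha : a ≤ e)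
    (hc : e ≤ c) : (t⁻¹ * r) ^ e ≤ t ^ (-γ) * (r ^ a + r ^ c) := by
  have ht₀ : 0 < t := zero_lt_one.trans_le ht
  rw [Real.mul_rpow (inv_pos.2 ht₀).le hr.le, Real.inv_rpow ht₀.le, ← Real.rpow_neg ht₀.le]
  gcongr
  exact rpow_le_rpow_add_rpow hr ha hc

lemma abs_log_le_inv_mul_rpow_add {r ε : ℝ} (hr : 0 < r) (hε : 0 < ε) :
    |Real.log r| ≤ ε⁻¹ * (r ^ ε + r ^ (-ε)) := by
  have hlarge : Real.log r ≤ ε⁻¹ * r ^ ε := by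
    simpa only [inv_mul_eq_div] using Real.log_le_rpow_div hr.le hε
  have hsmall : -Real.log r ≤ ε⁻¹ * r ^ (-ε) := by
    have h := Real.log_le_rpow_div (inv_pos.2 hr).le hε
    rwa [Real.log_inv, Real.inv_rpow hr.le, ← Real.rpow_neg hr.le, ← inv_mul_eq_div] at h
  have hpos : 0 < ε⁻¹ * r ^ ε := by positivity
  have hneg : 0 < ε⁻¹ * r ^ (-ε) := by positivity
  rw [mul_add, abs_le]
  constructor <;> linarith

lemma norm_log_le_mul_rpow_add {x : ℂ} {ε : ℝ} (hx : x ≠ 0) (hε : 0 < ε) :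
    ‖Complex.log x‖ ≤ (ε⁻¹ + Real.pi) * (‖x‖ ^ ε + ‖x‖ ^ (-ε)) := by
  have hr := norm_pos_iff.2 hx
  have hone : 1 ≤ ‖x‖ ^ ε + ‖x‖ ^ (-ε) := by
    simpa only [Real.rpow_zero, add_comm] using
      rpow_le_rpow_add_rpow hr (neg_nonpos.2 hε.le) hε.le
  calc ‖Complex.log x‖ ≤ |(Complex.log x).re| + |(Complex.log x).im| :=
        Complex.norm_le_abs_re_add_abs_im _
    _ ≤ ε⁻¹ * (‖x‖ ^ ε + ‖x‖ ^ (-ε)) + Real.pi * (‖x‖ ^ ε + ‖x‖ ^ (-ε)) := by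
        rw [Complex.log_re, Complex.log_im]
        gcongr
        · exact abs_log_le_inv_mul_rpow_add hr hε
        · exact (Complex.abs_arg_le_pi x).trans (le_mul_of_one_le_right Real.pi_pos.le hone)
    _ = _ := by ring

section lipschitz

variable {η δ b t β β' : ℝ} {l x s v : ℂ}

lemma hasDerivAt_resolventRemainder_cpow (hδ : 0 < δ) (hβ₀ : 0 ≤ β) (hβ₁ : β ≤ 1)
    (hl : IsSeparatedFromSector η δ l) (hx : x ∈ sector η) :
    HasDerivAt (fun β : ℝ ↦ resolventRemainder l (x ^ (β : ℂ)))
      (x ^ (β : ℂ) * (x ^ (β : ℂ) - 2 * l) / (x ^ (β : ℂ) - l) ^ 2 *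
        (x ^ (β : ℂ) * Complex.log x)) β := by
  have hpow : HasDerivAt (fun β : ℂ ↦ x ^ β) (x ^ (β : ℂ) * Complex.log x) β := by
    simpa using (hasDerivAt_id (β : ℂ)).const_cpow (c := x) (Or.inl hx.1)
  exact ((hasDerivAt_resolventRemainder hδ hl (cpow_mem_sector hβ₀ hβ₁ hx)).comp _ hpow).comp_ofReal

lemma norm_deriv_resolventRemainder_cpow_le {ε : ℝ} (hε : 0 < ε) (hδ : 0 < δ) (hβ₀ : 0 ≤ β)
    (hβ₁ : β ≤ 1) (hl₀ : l ≠ 0) (hl : IsSeparatedFromSector η δ l) (hx : x ∈ sector η) :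
    ‖x ^ (β : ℂ) * (x ^ (β : ℂ) - 2 * l) / (x ^ (β : ℂ) - l) ^ 2 * (x ^ (β : ℂ) * Complex.log x)‖ ≤
      2 * δ⁻¹ ^ 2 * ‖l‖⁻¹ * (ε⁻¹ + Real.pi) * (‖x‖ ^ (2 * β + ε) + ‖x‖ ^ (2 * β - ε)) := by
  have hp := cpow_mem_sector hβ₀ hβ₁ hx
  have hx₀ := norm_pos_iff.2 hx.1
  have := norm_pos_iff.2 hl₀
  have hfactor : ‖x ^ (β : ℂ)‖ / (‖x ^ (β : ℂ)‖ + ‖l‖) ≤ ‖x ^ (β : ℂ)‖ * ‖l‖⁻¹ := by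
    rw [← div_eq_mul_inv]
    gcongr
    exact le_add_of_nonneg_left (norm_nonneg _)
  rw [norm_mul, norm_mul (x ^ (β : ℂ))]
  calc _ ≤ 2 * δ⁻¹ ^ 2 * (‖x ^ (β : ℂ)‖ * ‖l‖⁻¹) *
        (‖x ^ (β : ℂ)‖ * ((ε⁻¹ + Real.pi) * (‖x‖ ^ ε + ‖x‖ ^ (-ε)))) := by
        gcongr
        · refine (norm_deriv_resolventRemainder_le hδ hl hp).trans ?_
          gcongr
        · exact norm_log_le_mul_rpow_add hx.1 hε
    _ = _ := by
        rw [Complex.norm_cpow_real, sub_eq_add_neg, Real.rpow_add hx₀, Real.rpow_add hx₀, two_mul β,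
          Real.rpow_add hx₀]
        ring

lemma norm_resolventRemainder_cpow_sub_le (hδ : 0 < δ) (hb : 0 < b) (hbβ : b ≤ β) (hββ' : β ≤ β')
    (hβ' : β' ≤ 1) (ht : 1 ≤ t) (hl₀ : l ≠ 0) (hl : IsSeparatedFromSector η δ l)
    (hs : s ∈ sector η) :
    ‖resolventRemainder l (((t⁻¹ : ℝ) * s) ^ (β' : ℂ)) -
        resolventRemainder l (((t⁻¹ : ℝ) * s) ^ (β : ℂ))‖ ≤
      2 * δ⁻¹ ^ 2 * ‖l‖⁻¹ * ((b / 2)⁻¹ + Real.pi) *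
        (2 * (t ^ (-(β + b / 2)) * (‖s‖ ^ b + ‖s‖ ^ (3 : ℝ)))) * (β' - β) := by
  have ht₀ : 0 < t := zero_lt_one.trans_le ht
  have hr := norm_pos_iff.2 hs.1
  have hx := ofReal_mul_mem_sector (inv_pos.2 ht₀) hs
  refine norm_image_sub_le_of_norm_deriv_le_segment'
    (f := fun β : ℝ ↦ resolventRemainder l (((t⁻¹ : ℝ) * s) ^ (β : ℂ)))
    (fun ξ hξ ↦ (hasDerivAt_resolventRemainder_cpow hδ (by linarith [hξ.1]) (by linarith [hξ.2])
      hl hx).hasDerivWithinAt) (fun ξ ⟨hβξ, hξβ'⟩ ↦ ?_) β' ⟨hββ', le_rfl⟩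
  refine (norm_deriv_resolventRemainder_cpow_le (half_pos hb) hδ (by linarith) (by linarith)
    hl₀ hl hx).trans ?_
  rw [norm_mul, Complex.norm_of_nonneg (inv_pos.2 ht₀).le, two_mul (t ^ _ * _)]
  gcongr <;> exact inv_mul_rpow_le hr ht (by linarith) (by linarith) (by linarith)

lemma norm_remainderSymbol_sub_le (hδ : 0 < δ) (hb : 0 < b) (hbβ : b ≤ β) (hββ' : β ≤ β')
    (hβ' : β' ≤ 1) (ht : 1 ≤ t) (hl₀ : l ≠ 0) (hl : IsSeparatedFromSector η δ l)
    (hs : s ∈ sector η) :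
    ‖remainderSymbol l t β' s - remainderSymbol l t β s‖ ≤
      4 * δ⁻¹ ^ 2 * ‖l‖⁻¹ * ((b / 2)⁻¹ + Real.pi) * t ^ (-(β + b / 2)) * (β' - β) *
        (‖s‖ ^ (b - 1) + ‖s‖ ^ (2 : ℝ)) := by
  have ht₀ : 0 < t := zero_lt_one.trans_le ht
  have hr := norm_pos_iff.2 hs.1
  have hcube : ‖s‖ ^ (3 : ℝ) = ‖s‖ ^ (2 : ℝ) * ‖s‖ := by
    rw [← Real.rpow_add_one hr.ne']
    norm_num
  rw [remainderSymbol_eq ht₀ hs.1, remainderSymbol_eq ht₀ hs.1, ← mul_sub, norm_mul, norm_inv]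
  refine (mul_le_mul_of_nonneg_left (norm_resolventRemainder_cpow_sub_le hδ hb hbβ hββ' hβ' ht
    hl₀ hl hs) (inv_nonneg.2 hr.le)).trans_eq ?_
  rw [Real.rpow_sub_one hr.ne', hcube]
  field_simp
  ring

theorem exists_norm_hankelIntegral_remainderSymbol_sub_le (hv : IsRayDirection η v) (hδ : 0 < δ)
    (hb : 0 < b) (hl₀ : l ≠ 0) (hl : IsSeparatedFromSector η δ l) :
    ∃ M : ℝ, ∀ t β β' : ℝ, 1 ≤ t → b ≤ β → β ≤ β' → β' ≤ 1 →
      ‖hankelIntegral (remainderSymbol l t β') 0 v - hankelIntegral (remainderSymbol l t β) 0 v‖ ≤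
        M * t ^ (-(β + b / 2)) * (β' - β) := by
  have hweight : IntegrableOn
      (fun r : ℝ ↦ (r ^ (b - 1) + r ^ (2 : ℝ)) * Real.exp (-η * r)) (Ioi 0) := by
    simp only [add_mul]
    exact (integrableOn_rpow_mul_exp_neg_mul hv.pos (by linarith)).add
      (integrableOn_rpow_mul_exp_neg_mul hv.pos (by norm_num))
  refine ⟨2 * (4 * δ⁻¹ ^ 2 * ‖l‖⁻¹ * ((b / 2)⁻¹ + Real.pi) *
    ∫ r in Ioi (0 : ℝ), (r ^ (b - 1) + r ^ (2 : ℝ)) * Real.exp (-η * r)), ?_⟩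
  intro t β β' ht hbβ hββ' hβ'
  have ht₀ : 0 < t := zero_lt_one.trans_le ht
  have hsymbol {ξ : ℝ} (hbξ : b ≤ ξ) (hξ : ξ ≤ 1) :=
    isSymbol_remainderSymbol hv.lt_one hδ (hb.le.trans hbξ) hξ ht₀ hl
  set A := 4 * δ⁻¹ ^ 2 * ‖l‖⁻¹ * ((b / 2)⁻¹ + Real.pi) * t ^ (-(β + b / 2)) * (β' - β) with hA
  have hbound := norm_hankelIntegral_sub_le hv (w := fun r ↦ A * (r ^ (b - 1) + r ^ (2 : ℝ)))
    (fun v hv ↦ (hsymbol (hbβ.trans hββ') hβ').integrableOn_ray_zero (by linarith) (by linarith) hv)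
    (fun v hv ↦ (hsymbol hbβ (hββ'.trans hβ')).integrableOn_ray_zero (by linarith) (by linarith) hv)
    (by simpa only [IntegrableOn, mul_assoc] using hweight.const_mul A)
    (fun s hs ↦ norm_remainderSymbol_sub_le hδ hb hbβ hββ' hβ' ht hl₀ hl hs)
  refine hbound.trans_eq ?_
  simp only [mul_assoc A, integral_const_mul]
  rw [hA]
  ring

end lipschitz

section Gamma

variable {x y : ℝ}

lemma inv_Gamma_eq_div_Gamma_one_add (hx : 0 ≤ x) :
    (Real.Gamma x)⁻¹ = x / Real.Gamma (1 + x) := by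
  rcases hx.eq_or_lt with rfl | hx
  · simp
  · have := Real.Gamma_pos_of_pos hx
    rw [add_comm, Real.Gamma_add_one hx.ne']
    field_simp

lemma Gamma_one_add_le_one (hx₀ : 0 ≤ x) (hx₁ : x ≤ 1) : Real.Gamma (1 + x) ≤ 1 := by
  have hconv := Real.convexOn_Gamma.2 (mem_Ioi.2 one_pos) (mem_Ioi.2 two_pos)
    (sub_nonneg.2 hx₁) hx₀ (sub_add_cancel 1 x)
  simp only [smul_eq_mul, Real.Gamma_one, Real.Gamma_two] at hconv
  rw [show (1 - x) * 1 + x * 2 = 1 + x by ring] at hconv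
  linarith

lemma log_Gamma_one_add_sub_le (hy : 0 ≤ y) (hyx : y < x) (hx : x < 1) :
    Real.log (Real.Gamma (1 + x)) - Real.log (Real.Gamma (1 + y)) ≤ Real.log 2 * (x - y) := by
  have hΓ3 : Real.Gamma 3 = 2 := by simp
  -- by log-convexity the slope of `log Γ` on `[1, 2]` is at most its slope `log 2` on `[2, 3]`
  have hslope := (Real.convexOn_log_Gamma.slope_mono_adjacent (x := 1 + y) (y := 1 + x) (z := 2)
    (by simp; linarith) (by simp) (by linarith) (by linarith)).trans
    (Real.convexOn_log_Gamma.slope_mono_adjacent (x := 1 + x) (y := 2) (z := 3)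
      (by simp; linarith) (by simp) (by linarith) (by norm_num))
  simp only [Function.comp_apply, Real.Gamma_two, hΓ3, Real.log_one] at hslope
  rw [div_le_iff₀ (by linarith)] at hslope
  linarith

lemma inv_Gamma_one_add_mul_le (hy : 0 ≤ y) (hyx : y < x) (hx : x < 1) :
    (Real.Gamma (1 + y))⁻¹ * (1 - Real.log 2 * (x - y)) ≤ (Real.Gamma (1 + x))⁻¹ := by
  have hΓx : 0 < Real.Gamma (1 + x) := Real.Gamma_pos_of_pos (by linarith)
  have hΓy : 0 < Real.Gamma (1 + y) := Real.Gamma_pos_of_pos (by linarith)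
  have hlog : Real.log ((Real.Gamma (1 + y))⁻¹) - Real.log 2 * (x - y) ≤
      Real.log ((Real.Gamma (1 + x))⁻¹) := by
    rw [Real.log_inv, Real.log_inv]
    linarith [log_Gamma_one_add_sub_le hy hyx hx]
  calc _ ≤ (Real.Gamma (1 + y))⁻¹ * Real.exp (-(Real.log 2 * (x - y))) := by
        gcongr
        exact Real.one_sub_le_exp_neg _
    _ = Real.exp (Real.log ((Real.Gamma (1 + y))⁻¹) - Real.log 2 * (x - y)) := by
        rw [Real.exp_sub, Real.exp_neg, Real.exp_log (inv_pos.2 hΓy), div_eq_mul_inv]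
    _ ≤ _ := by
        rw [← Real.le_log_iff_exp_le (inv_pos.2 hΓx)]
        exact hlog

lemma log_two_lt_one : Real.log 2 < 1 := by linarith [Real.log_two_lt_d9]

theorem mul_sub_le_inv_Gamma_sub (hy : 0 ≤ y) (hyx : y < x) (hx : x < 1) :
    (1 - Real.log 2) * (x - y) ≤ (Real.Gamma x)⁻¹ - (Real.Gamma y)⁻¹ := by
  have hΓy : 0 < Real.Gamma (1 + y) := Real.Gamma_pos_of_pos (by linarith)
  have hone : 1 ≤ (Real.Gamma (1 + y))⁻¹ :=
    (one_le_inv₀ hΓy).2 (Gamma_one_add_le_one hy (by linarith))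
  have hlog : 0 < Real.log 2 := Real.log_pos one_lt_two
  rw [inv_Gamma_eq_div_Gamma_one_add (hy.trans hyx.le), inv_Gamma_eq_div_Gamma_one_add hy]
  calc (1 - Real.log 2) * (x - y)
      ≤ (1 - Real.log 2 * x) * (x - y) := by
        gcongr
        exact mul_le_of_le_one_right hlog.le hx.le
    _ ≤ (Real.Gamma (1 + y))⁻¹ * ((1 - Real.log 2 * x) * (x - y)) :=
        le_mul_of_one_le_left (mul_nonneg (by nlinarith [log_two_lt_one]) (by linarith)) hone
    _ = x * ((Real.Gamma (1 + y))⁻¹ * (1 - Real.log 2 * (x - y))) - y / Real.Gamma (1 + y) := by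
        ring
    _ ≤ x / Real.Gamma (1 + x) - y / Real.Gamma (1 + y) := by
        rw [div_eq_mul_inv x]
        gcongr
        · linarith
        · exact inv_Gamma_one_add_mul_le hy hyx hx

end Gamma

section injectivity

variable {b t β β' : ℝ} {l : ℂ}

lemma rpow_neg_mul_le_rpow_neg_mul_inv_Gamma_sub (ht : 1 ≤ t) (hβ : 0 < β) (hββ' : β < β')
    (hβ' : β' ≤ 1) :
    t ^ (-β) * ((1 - Real.log 2) * (β' - β)) ≤
      t ^ (-β) * (Real.Gamma (1 - β))⁻¹ - t ^ (-β') * (Real.Gamma (1 - β'))⁻¹ := by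
  have : 0 ≤ (Real.Gamma (1 - β'))⁻¹ :=
    inv_nonneg.2 (Real.Gamma_nonneg_of_nonneg (sub_nonneg.2 hβ'))
  have hslope := mul_sub_le_inv_Gamma_sub (sub_nonneg.2 hβ') (sub_lt_sub_left hββ' 1)
    (sub_lt_self 1 hβ)
  rw [sub_sub_sub_cancel_left] at hslope
  calc _ ≤ t ^ (-β) * ((Real.Gamma (1 - β))⁻¹ - (Real.Gamma (1 - β'))⁻¹) := by gcongr
    _ ≤ _ := by
        rw [mul_sub]
        gcongr

lemma exists_isSeparatedFromSector_of_re_neg (hl : l.re < 0) :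
    ∃ η δ : ℝ, 0 < η ∧ η < 1 ∧ 0 < δ ∧ IsSeparatedFromSector η δ l := by
  have hl₀ : l ≠ 0 := by rintro rfl; exact lt_irrefl 0 hl
  have hpos := norm_pos_iff.2 hl₀
  have hη₀ : 0 < -l.re / (2 * ‖l‖) := div_pos (neg_pos.2 hl) (by positivity)
  have hη₁ : -l.re / (2 * ‖l‖) < 1 := by
    rw [div_lt_one (by positivity)]
    linarith [neg_le_of_abs_le (Complex.abs_re_le_norm l)]
  refine ⟨_, _, hη₀, hη₁, by positivity, isSeparatedFromSector_of_re_le hη₀.le hη₁.le ?_⟩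
  exact le_of_eq (by field_simp)

lemma hankelIntegral_remainderSymbol_sub_of_mittagLeffler_eq {η δ : ℝ} {v : ℂ}
    (hv : IsRayDirection η v) (him : 0 < v.im) (hδ : 0 < δ) (hβ : 0 < β) (hββ' : β ≤ β')
    (hβ' : β' ≤ 1) (ht : 0 < t) (hl : IsSeparatedFromSector η δ l)
    (heq : mittagLeffler β (l * (t ^ β : ℝ)) = mittagLeffler β' (l * (t ^ β' : ℝ))) :
    hankelIntegral (remainderSymbol l t β') 0 v - hankelIntegral (remainderSymbol l t β) 0 v =
      (2 * Real.pi * (t ^ (-β) * (Real.Gamma (1 - β))⁻¹ -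
        t ^ (-β') * (Real.Gamma (1 - β'))⁻¹) : ℝ) * -Complex.I := by
  rw [hankelIntegral_remainderSymbol hv him hδ (hβ.trans_le hββ') hβ' ht hl,
    hankelIntegral_remainderSymbol hv him hδ hβ (hββ'.trans hβ') ht hl, heq]
  push_cast
  ring

theorem exists_le_mul_rpow_of_mittagLeffler_eq (hl : l.re < 0) (hb : 0 < b) :
    ∃ M : ℝ, ∀ t β β' : ℝ, 1 ≤ t → b ≤ β → β < β' → β' ≤ 1 →
      mittagLeffler β (l * (t ^ β : ℝ)) = mittagLeffler β' (l * (t ^ β' : ℝ)) →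
        1 - Real.log 2 ≤ M * t ^ (-(b / 2)) := by
  have hl₀ : l ≠ 0 := by rintro rfl; exact lt_irrefl 0 hl
  obtain ⟨η, δ, hη₀, hη₁, hδ, hsep⟩ := exists_isSeparatedFromSector_of_re_neg hl
  obtain ⟨v, hv, him⟩ := exists_isRayDirection_im_pos hη₀ hη₁
  obtain ⟨M, hM⟩ := exists_norm_hankelIntegral_remainderSymbol_sub_le hv hδ hb hl₀ hsep
  refine ⟨M, fun t β β' ht hbβ hββ' hβ' heq ↦ ?_⟩
  have ht₀ : 0 < t := zero_lt_one.trans_le ht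
  have hβ : 0 < β := hb.trans_le hbβ
  have : 0 < β' - β := sub_pos.2 hββ'
  set R : ℝ := t ^ (-β) * (Real.Gamma (1 - β))⁻¹ - t ^ (-β') * (Real.Gamma (1 - β'))⁻¹
  have hlower : t ^ (-β) * ((1 - Real.log 2) * (β' - β)) ≤ R :=
    rpow_neg_mul_le_rpow_neg_mul_inv_Gamma_sub ht hβ hββ' hβ'
  have hR : 0 ≤ R := le_trans (by have := sub_pos.2 log_two_lt_one; positivity) hlower
  have hupper : 2 * Real.pi * R ≤ M * t ^ (-(β + b / 2)) * (β' - β) := by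
    have hM' := hM t β β' ht hbβ hββ'.le hβ'
    rw [hankelIntegral_remainderSymbol_sub_of_mittagLeffler_eq hv him hδ hβ hββ'.le hβ' ht₀ hsep
      heq, norm_mul, norm_neg, Complex.norm_I, mul_one, Complex.norm_real] at hM'
    exact (le_abs_self _).trans hM'
  refine le_of_mul_le_mul_left ?_ (by positivity : 0 < t ^ (-β) * (β' - β))
  calc t ^ (-β) * (β' - β) * (1 - Real.log 2) = t ^ (-β) * ((1 - Real.log 2) * (β' - β)) := by ring
    _ ≤ R := hlower
    _ ≤ 2 * Real.pi * R := le_mul_of_one_le_left hR (by linarith [Real.pi_gt_three])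
    _ ≤ M * t ^ (-(β + b / 2)) * (β' - β) := hupper
    _ = t ^ (-β) * (β' - β) * (M * t ^ (-(b / 2))) := by
        rw [neg_add, Real.rpow_add ht₀]
        ring

theorem eventually_injOn_mittagLeffler (hl : l.re < 0) (hb : 0 < b) :
    ∀ᶠ t : ℝ in atTop, InjOn (fun β : ℝ ↦ mittagLeffler β (l * (t ^ β : ℝ))) (Icc b 1) := by
  obtain ⟨M, hM⟩ := exists_le_mul_rpow_of_mittagLeffler_eq hl hb
  have hlim : Tendsto (fun t : ℝ ↦ M * t ^ (-(b / 2))) atTop (𝓝 0) := by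
    simpa only [mul_zero] using (tendsto_rpow_neg_atTop (half_pos hb)).const_mul M
  filter_upwards [eventually_ge_atTop 1, hlim.eventually_lt_const (sub_pos.2 log_two_lt_one)]
    with t ht hlt β hβ β' hβ' heq
  rcases lt_trichotomy β β' with hlt' | rfl | hgt
  · exact absurd (hM t β β' ht hβ.1 hlt' hβ'.2 heq) hlt.not_ge
  · rfl
  · exact absurd (hM t β' β ht hβ'.1 hgt hβ.2 heq.symm) hlt.not_ge

end injectivity

/-- **Uniqueness of the vector-order.** Let `K` be an invertible `m × m` complex
matrix, `Re λ_l < 0` for all `l`, and `0 < β₀ < 1`. Then there is `T₀ > 1` such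
that for all `t₀ ≥ T₀` the map
`B ↦ (∑_l K_{j,l} E_{B_l}(λ_l t₀^{B_l}))_j` is injective on `[β₀, 1]^m`. -/
theorem caputo_order_map_injective (m : ℕ) (hm : 1 ≤ m)
    (K : Matrix (Fin m) (Fin m) ℂ) (hK : IsUnit K)
    (lam : Fin m → ℂ) (hlam : ∀ l, (lam l).re < 0)
    (β₀ : ℝ) (hβ₀ : 0 < β₀) (hβ₀1 : β₀ < 1) :
    ∃ T₀ : ℝ, 1 < T₀ ∧ ∀ t₀ : ℝ, T₀ ≤ t₀ →
      Set.InjOn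
        (fun B : Fin m → ℝ => fun j : Fin m =>
          ∑ l, K j l * mittagLeffler (B l) (lam l * ((t₀ ^ (B l) : ℝ) : ℂ)))
        {B : Fin m → ℝ | ∀ l, B l ∈ Set.Icc β₀ 1} := by
  obtain ⟨T, hT⟩ := eventually_atTop.1 <| eventually_all.2 fun l ↦
    eventually_injOn_mittagLeffler (hlam l) hβ₀
  refine ⟨max T 2, one_lt_two.trans_le (le_max_right T 2), fun t ht B hB B' hB' heq ↦ ?_⟩
  have hcomponents : (fun l ↦ mittagLeffler (B l) (lam l * (t ^ B l : ℝ))) =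
      fun l ↦ mittagLeffler (B' l) (lam l * (t ^ B' l : ℝ)) :=
    Matrix.mulVec_injective_of_isUnit hK heq
  funext l
  exact hT t ((le_max_left T 2).trans ht) l (hB l) (hB' l) (congrFun hcomponents l)
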